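/- arXiv:math/9903186 — 2 statements merged into one kernel-verified Lean document; each statement's English description precedes it below -/
import Mathlib

section
/- Let H₀ be self-adjoint in the complex separable Hilbert space H, Ω ⊆ ℝ an open interval, and {V(s)}_{s∈Ω} ⊂ B₁(H) a family of nonnegative trace class operators, V(s) = K(s)K(s)* with K(s) ∈ B₂(H), which is continuously differentiable in s in trace norm; set H(s) = H₀ + V(s) with dom(H(s)) = dom(H₀) and Φ(z,s) = I_H + K(s)*(H₀ − z)⁻¹K(s). Then for all s ∈ Ω and z ∈ ℂ∖ℝ, (d/ds) tr_H(log(Φ(z,s))) = tr_H(V'(s)(H(s) − z)⁻¹), where V'(s) denotes the trace-norm derivative of V(s). -/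
open Complex Filter MeasureTheory TopologicalSpace ContinuousLinearMap
open scoped InnerProductSpace Topology

noncomputable section

namespace SpectralShift

variable {H : Type*} [NormedAddCommGroup H] [InnerProductSpace ℂ H] [CompleteSpace H]

/-- The imaginary part `(T - T*)/(2i)` of a bounded operator. -/
def imPart (T : H →L[ℂ] H) : H →L[ℂ] H :=
  ((2 * Complex.I)⁻¹ : ℂ) • (T - ContinuousLinearMap.adjoint T)

/-- An operator-valued Herglotz function: analytic on the open upper half-plane with
nonnegative imaginary part there. -/
def IsHerglotz (M : ℂ → H →L[ℂ] H) : Prop :=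
  DifferentiableOn ℂ M {z : ℂ | 0 < z.im} ∧ ∀ z : ℂ, 0 < z.im → (imPart (M z)).IsPositive

/-- The integrand `(T + iλ)⁻¹ - (1 + iλ)⁻¹ I` in the integral representation of `log T`. -/
def logIntegrand (T : H →L[ℂ] H) (t : ℝ) : H →L[ℂ] H :=
  Ring.inverse (T + ((t : ℂ) * Complex.I) • (1 : H →L[ℂ] H)) -
    (((1 : ℂ) + (t : ℂ) * Complex.I)⁻¹) • (1 : H →L[ℂ] H)

/-- `log T = -i ∫₀^∞ ((T + iλ)⁻¹ - (1 + iλ)⁻¹ I) dλ` as a norm-convergent improper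
Riemann integral, for a dissipative boundedly invertible `T`. -/
def opLog (T : H →L[ℂ] H) : H →L[ℂ] H :=
  limUnder atTop (fun R : ℝ => (-Complex.I) • ∫ t in (0:ℝ)..R, logIntegrand T t)

/-- The logarithm `log S = (log S*)*` of an operator `S` with `-S` dissipative. -/
def opLogAnti (T : H →L[ℂ] H) : H →L[ℂ] H :=
  ContinuousLinearMap.adjoint (opLog (ContinuousLinearMap.adjoint T))

/-- The logarithm of a Herglotz-type operator family on `ℂ ∖ ℝ`, using `log T` in the
upper half-plane and the convention `log S = (log S*)*` in the lower half-plane. -/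
def logHerg (Φ : ℂ → H →L[ℂ] H) (z : ℂ) : H →L[ℂ] H :=
  if 0 < z.im then opLog (Φ z) else opLogAnti (Φ z)

/-- The logarithm of an anti-Herglotz-type operator family on `ℂ ∖ ℝ` (nonpositive
imaginary part in the upper half-plane). -/
def logAntiHerg (Φ : ℂ → H →L[ℂ] H) (z : ℂ) : H →L[ℂ] H :=
  if 0 < z.im then opLogAnti (Φ z) else opLog (Φ z)

/-- Trace class: absolute summability of the diagonal in every Hilbert basis. -/
def IsTraceClass (T : H →L[ℂ] H) : Prop :=
  ∀ (w : Set H) (b : HilbertBasis w ℂ H), Summable fun i => ‖⟪(b i : H), T (b i)⟫_ℂ‖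

/-- The trace, computed in a fixed Hilbert basis (basis-independent for trace
class operators). -/
def trH (T : H →L[ℂ] H) : ℂ :=
  ∑' i, ⟪((exists_hilbertBasis ℂ H).choose_spec.choose i : H),
    T ((exists_hilbertBasis ℂ H).choose_spec.choose i)⟫_ℂ

/-- The trace norm, via duality with bounded operators (the correct value for trace
class operators). -/
def traceNorm (T : H →L[ℂ] H) : ℝ :=
  ⨆ B : {B : H →L[ℂ] H // ‖B‖ ≤ 1}, ‖trH (T * (B : H →L[ℂ] H))‖

/-- Hilbert-Schmidt operators. -/
def IsHilbertSchmidt (K : H →L[ℂ] H) : Prop :=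
  ∀ (w : Set H) (b : HilbertBasis w ℂ H), Summable fun i => ‖K (b i)‖ ^ 2

/-- A (possibly unbounded) self-adjoint operator in `H`: a densely defined symmetric
operator possessing everywhere-defined bounded resolvents at every non-real point. -/
structure SelfAdjointOp (H : Type*) [NormedAddCommGroup H] [InnerProductSpace ℂ H]
    [CompleteSpace H] where
  dom : Submodule ℂ H
  dense_dom : Dense (dom : Set H)
  op : dom →ₗ[ℂ] H
  symmetric : ∀ x y : dom, ⟪op x, (y : H)⟫_ℂ = ⟪(x : H), op y⟫_ℂ
  resolvent : ℂ → H →L[ℂ] H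
  resolvent_mem : ∀ {z : ℂ}, z.im ≠ 0 → ∀ x : H, resolvent z x ∈ dom
  op_resolvent : ∀ {z : ℂ} (hz : z.im ≠ 0) (x : H),
    op ⟨resolvent z x, resolvent_mem hz x⟩ - z • resolvent z x = x
  resolvent_op : ∀ {z : ℂ} (hz : z.im ≠ 0) (x : dom),
    resolvent z (op x - z • (x : H)) = x

/-- `B = A + V` for a bounded operator `V` (with `dom B = dom A`). -/
def IsSumOf (B A : SelfAdjointOp H) (V : H →L[ℂ] H) : Prop :=
  B.dom = A.dom ∧ ∀ (x : H) (hxB : x ∈ B.dom) (hxA : x ∈ A.dom),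
    B.op ⟨x, hxB⟩ = A.op ⟨x, hxA⟩ + V x

/-- `R` is the (bounded, everywhere defined) resolvent `(A - z)⁻¹` of `A` at `z`. -/
def SelfAdjointOp.IsResolventAt (A : SelfAdjointOp H) (z : ℂ) (R : H →L[ℂ] H) : Prop :=
  (∀ x : H, R x ∈ A.dom) ∧
  (∀ (x : H) (hx : R x ∈ A.dom), A.op ⟨R x, hx⟩ - z • R x = x) ∧
  (∀ x : A.dom, R (A.op x - z • (x : H)) = x)

/-- `E` is the projection-valued spectral measure of the self-adjoint operator `A`. -/
def IsSpectralMeasure (A : SelfAdjointOp H) (E : Set ℝ → H →L[ℂ] H) : Prop :=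
  (∀ B : Set ℝ, MeasurableSet B → IsSelfAdjoint (E B)) ∧
  (∀ B C : Set ℝ, MeasurableSet B → MeasurableSet C → E B * E C = E (B ∩ C)) ∧
  (E Set.univ = 1) ∧
  (∀ (f : ℕ → Set ℝ), (∀ n, MeasurableSet (f n)) → Pairwise (Function.onFun Disjoint f) →
    ∀ x : H, HasSum (fun n => E (f n) x) (E (⋃ n, f n) x)) ∧
  ∃ μ : H → Measure ℝ,
    (∀ (f : H) (B : Set ℝ), MeasurableSet B → μ f B = ENNReal.ofReal (⟪f, E B f⟫_ℂ).re) ∧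
    ∀ (z : ℂ), z.im ≠ 0 → ∀ f : H,
      ⟪f, A.resolvent z f⟫_ℂ = ∫ l : ℝ, ((l : ℂ) - z)⁻¹ ∂(μ f)

/-- Invertibility of `T` restricted to the range of the orthogonal projection `P`
(for `T` commuting with `P`), with inverse `S` supported in `ran P`. -/
def InvertibleOn (T P : H →L[ℂ] H) : Prop :=
  ∃ S : H →L[ℂ] H, S * P = S ∧ P * S = S ∧ S * (T * P) = P ∧ (P * T) * S = P

/-- The spectral projection `J₊ = (I + J)/2` onto `H₊` for a self-adjoint unitary `J`. -/
def Jplus (J : H →L[ℂ] H) : H →L[ℂ] H := ((2 : ℂ)⁻¹) • (1 + J)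

/-- The spectral projection `J₋ = (I - J)/2` onto `H₋` for a self-adjoint unitary `J`. -/
def Jminus (J : H →L[ℂ] H) : H →L[ℂ] H := ((2 : ℂ)⁻¹) • (1 - J)

/-- `Φ₊(z) = I + J₊ K* (H₀ - z)⁻¹ K J₊`, the operator on `H` inducing `Φ₊(z)` on `H₊`
(and the identity on `H₋`). -/
def PhiPlus (H0 : SelfAdjointOp H) (J K : H →L[ℂ] H) (z : ℂ) : H →L[ℂ] H :=
  1 + Jplus J * (ContinuousLinearMap.adjoint K * H0.resolvent z * K) * Jplus J

/-- `Φ̃₋(z) = I - J₋ K* (H₊ - z)⁻¹ K J₋`, the operator on `H` inducing `Φ̃₋(z)` on `H₋`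
(and the identity on `H₊`). -/
def PhiMinusT (Hp : SelfAdjointOp H) (J K : H →L[ℂ] H) (z : ℂ) : H →L[ℂ] H :=
  1 - Jminus J * (ContinuousLinearMap.adjoint K * Hp.resolvent z * K) * Jminus J

set_option linter.unusedSimpArgs false
set_option linter.unusedSectionVars false
/-- index set of the fixed basis -/
abbrev wS (H : Type*) [NormedAddCommGroup H] [InnerProductSpace ℂ H] [CompleteSpace H] : Set H :=
  (exists_hilbertBasis ℂ H).choose

/-- the fixed basis -/
abbrev eB : HilbertBasis (wS H) ℂ H := (exists_hilbertBasis ℂ H).choose_spec.choose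

lemma trH_eq (T : H →L[ℂ] H) : trH T = ∑' i, ⟪(eB i : H), T (eB i)⟫_ℂ := rfl

lemma parseval {ι : Type*} (b : HilbertBasis ι ℂ H) (x : H) :
    HasSum (fun i => ‖⟪b i, x⟫_ℂ‖ ^ 2) (‖x‖ ^ 2) := by
  have h := b.hasSum_inner_mul_inner x x
  have h2 := (Complex.hasSum_re h)
  convert h2 using 1
  · ext i
    rw [← inner_conj_symm x (b i), mul_comm, Complex.mul_conj, Complex.normSq_eq_norm_sq,
      Complex.ofReal_re]
  · rw [inner_self_eq_norm_sq_to_K]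
    norm_cast

lemma hs_prod {ι ι' : Type*} (b : HilbertBasis ι ℂ H) (b' : HilbertBasis ι' ℂ H) (A : H →L[ℂ] H)
    (h : Summable fun i => ‖A (b i)‖ ^ 2) :
    Summable fun p : ι × ι' => ‖⟪b' p.2, A (b p.1)⟫_ℂ‖ ^ 2 := by
  refine (summable_prod_of_nonneg (fun p => by simp)).2 
    ⟨fun i => (parseval b' (A (b i))).summable, ?_⟩
  refine h.congr fun i => ?_
  exact (parseval b' (A (b i))).tsum_eq.symm

lemma hs_swap {ι ι' : Type*} (b : HilbertBasis ι ℂ H) (b' : HilbertBasis ι' ℂ H) (A : H →L[ℂ] H)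
    (h : Summable fun i => ‖A (b i)‖ ^ 2) :
    Summable fun j => ‖ContinuousLinearMap.adjoint A (b' j)‖ ^ 2 := by
  have h1 := (hs_prod b b' A h).prod_symm
  have h2 := ((summable_prod_of_nonneg (fun p => by simp)).1 h1).2
  convert h2 using 2 with j
  rw [← (parseval b _).tsum_eq]
  congr 1
  ext i
  simp only [Prod.fst_swap, Prod.snd_swap]
  rw [ContinuousLinearMap.adjoint_inner_right, norm_inner_symm]

/-- Hilbert-Schmidt in the fixed basis -/
def HS2 (A : H →L[ℂ] H) : Prop := Summable fun i => ‖A (eB i : H)‖ ^ 2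

lemma HS2.adj {A : H →L[ℂ] H} (h : HS2 A) : HS2 (ContinuousLinearMap.adjoint A) :=
  hs_swap eB eB A h

lemma HS2.mul_left {A : H →L[ℂ] H} (h : HS2 A) (N : H →L[ℂ] H) : HS2 (N * A) := by
  refine Summable.of_nonneg_of_le (fun i => by positivity) (fun i => ?_)
    (Summable.mul_left (‖N‖ ^ 2) h)
  rw [← mul_pow]
  exact pow_le_pow_left₀ (norm_nonneg _) (N.le_opNorm _) 2

lemma HS2.mul_right {A : H →L[ℂ] H} (h : HS2 A) (N : H →L[ℂ] H) : HS2 (A * N) := by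
  have h1 := (h.adj.mul_left (ContinuousLinearMap.adjoint N)).adj
  have e : ContinuousLinearMap.adjoint N * ContinuousLinearMap.adjoint A
      = ContinuousLinearMap.adjoint (A * N) := (ContinuousLinearMap.adjoint_comp A N).symm
  rwa [e, ContinuousLinearMap.adjoint_adjoint] at h1

lemma summable_mul_of_sq {ι : Type*} {f g : ι → ℝ} (hf : Summable fun i => f i ^ 2)
    (hg : Summable fun i => g i ^ 2) (hf0 : ∀ i, 0 ≤ f i) (hg0 : ∀ i, 0 ≤ g i) :
    Summable fun i => f i * g i := by
  refine Summable.of_nonneg_of_le (fun i => mul_nonneg (hf0 i) (hg0 i)) (fun i => ?_) (hf.add hg)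
  nlinarith [sq_nonneg (f i - g i), sq_nonneg (f i), sq_nonneg (g i)]

lemma HS2.mul_summable {A B : H →L[ℂ] H} (hA : HS2 A) (hB : HS2 B) :
    Summable fun i => ‖⟪(eB i : H), (A * B) (eB i)⟫_ℂ‖ := by
  refine Summable.of_nonneg_of_le (fun i => by positivity) (fun i => ?_)
    (summable_mul_of_sq hA.adj hB (fun i => norm_nonneg _) (fun i => norm_nonneg _))
  rw [mul_apply_eq_comp, ← ContinuousLinearMap.adjoint_inner_left]
  exact norm_inner_le_norm _ _

lemma HS2.tr_comm {A B : H →L[ℂ] H} (hA : HS2 A) (hB : HS2 B) :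
    trH (A * B) = trH (B * A) := by
  have key : ∀ A B : H →L[ℂ] H, trH (A * B) =
      ∑' i, ∑' j, ⟪(eB i : H), A (eB j)⟫_ℂ * ⟪(eB j : H), B (eB i)⟫_ℂ := by
    intro A B
    rw [trH_eq]
    congr 1
    ext i
    rw [mul_apply_eq_comp, ← ContinuousLinearMap.adjoint_inner_left,
      ← eB.tsum_inner_mul_inner]
    congr 1
    ext j
    rw [ContinuousLinearMap.adjoint_inner_left]
  rw [key A B, key B A]
  rw [← Summable.tsum_comm]
  · congr 1; ext i; congr 1; ext j; rw [mul_comm]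
  · refine Summable.of_norm ?_
    have h1 := (hs_prod eB eB A hA).prod_symm
    have h2 := hs_prod eB eB B hB
    refine (summable_mul_of_sq h1 h2 (fun i => norm_nonneg _) (fun i => norm_nonneg _)).congr ?_
    rintro ⟨i, j⟩
    simp [Function.uncurry]

/-- working notion of trace class -/
def Good (T : H →L[ℂ] H) : Prop := ∃ C : ℝ, ∀ M N : H →L[ℂ] H,
  Summable (fun i => ⟪(eB i : H), (M * T * N) (eB i)⟫_ℂ) ∧
  trH (M * T * N) = trH (T * (N * M)) ∧ ‖trH (T * N)‖ ≤ C * ‖N‖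

lemma HS2.good {A B : H →L[ℂ] H} (hA : HS2 A) (hB : HS2 B) : Good (A * B) := by
  refine ⟨∑' i, ‖ContinuousLinearMap.adjoint B (eB i : H)‖ * ‖A (eB i : H)‖, fun M N => ?_⟩
  have e1 : ∀ N, trH (A * B * N) = trH (B * (N * A)) := by
    intro N
    rw [mul_assoc, hA.tr_comm (hB.mul_right N), mul_assoc]
  have e2 : M * (A * B) * N = (M * A) * (B * N) := by simp only [mul_assoc]
  refine ⟨?_, ?_, ?_⟩
  · rw [e2]
    exact ((hA.mul_left M).mul_summable (hB.mul_right N)).of_norm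
  · rw [e1, e2, (hA.mul_left M).tr_comm (hB.mul_right N)]
    simp only [mul_assoc]
  · rw [e1, trH_eq]
    have hs := summable_mul_of_sq hB.adj hA (fun i => norm_nonneg _) (fun i => norm_nonneg _)
    rw [mul_comm, ← tsum_mul_left]
    refine tsum_of_norm_bounded (hs.mul_left ‖N‖).hasSum fun i => ?_
    rw [mul_apply_eq_comp, ← ContinuousLinearMap.adjoint_inner_left]
    refine (norm_inner_le_norm _ _).trans ?_
    have : ‖(N * A) (eB i : H)‖ ≤ ‖N‖ * ‖A (eB i : H)‖ := N.le_opNorm _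
    nlinarith [norm_nonneg (ContinuousLinearMap.adjoint B (eB i : H))]

lemma Good.summ {T : H →L[ℂ] H} (hT : Good T) (N : H →L[ℂ] H) :
    Summable (fun i => ⟪(eB i : H), (T * N) (eB i)⟫_ℂ) := by
  obtain ⟨C, hC⟩ := hT
  have := (hC 1 N).1
  rwa [one_mul] at this

lemma Good.cyc {T : H →L[ℂ] H} (hT : Good T) (M N : H →L[ℂ] H) :
    trH (M * T * N) = trH (T * (N * M)) := by
  obtain ⟨C, hC⟩ := hT
  exact (hC M N).2.1

lemma Good.comm {T : H →L[ℂ] H} (hT : Good T) (N : H →L[ℂ] H) : trH (T * N) = trH (N * T) := by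
  have := hT.cyc N 1
  rw [mul_one, one_mul] at this
  exact this.symm

lemma trH_add {S T : H →L[ℂ] H} (hS : Summable (fun i => ⟪(eB i : H), S (eB i)⟫_ℂ))
    (hT : Summable (fun i => ⟪(eB i : H), T (eB i)⟫_ℂ)) : trH (S + T) = trH S + trH T := by
  rw [trH_eq, trH_eq, trH_eq, ← hS.tsum_add hT]
  congr 1; ext i
  simp [inner_add_right]

lemma trH_smul (c : ℂ) (S : H →L[ℂ] H) : trH (c • S) = c * trH S := by
  rw [trH_eq, trH_eq, ← tsum_mul_left]
  congr 1; ext i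
  simp [inner_smul_right]

lemma Good.add {S T : H →L[ℂ] H} (hS : Good S) (hT : Good T) : Good (S + T) := by
  have sS := hS.summ
  have sT := hT.summ
  obtain ⟨C, hC⟩ := hS
  obtain ⟨D, hD⟩ := hT
  refine ⟨C + D, fun M N => ?_⟩
  obtain ⟨a1, a3, a4⟩ := hC M N
  obtain ⟨b1, b3, b4⟩ := hD M N
  rw [mul_add, add_mul, add_mul, add_mul, trH_add a1 b1, trH_add (sS _) (sT _),
    trH_add (sS _) (sT _), a3, b3]
  refine ⟨?_, rfl, ?_⟩
  · refine (a1.add b1).congr fun i => ?_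
    simp [inner_add_right]
  · rw [add_mul]
    exact (norm_add_le _ _).trans (add_le_add a4 b4)

lemma Good.smul {S : H →L[ℂ] H} (hS : Good S) (c : ℂ) : Good (c • S) := by
  obtain ⟨C, hC⟩ := hS
  refine ⟨‖c‖ * C, fun M N => ?_⟩
  obtain ⟨a1, a3, a4⟩ := hC M N
  simp only [smul_mul_assoc, mul_smul_comm, trH_smul]
  rw [a3]
  refine ⟨?_, rfl, ?_⟩
  · refine (a1.mul_left c).congr fun i => ?_
    simp [inner_smul_right]
  · rw [norm_mul, mul_assoc]
    exact mul_le_mul_of_nonneg_left a4 (norm_nonneg _)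

lemma Good.sub {S T : H →L[ℂ] H} (hS : Good S) (hT : Good T) : Good (S - T) := by
  have := hS.add (hT.smul (-1))
  rwa [neg_one_smul, ← sub_eq_add_neg] at this

/-- the trace functional -/
lemma Good.exists_clm {T : H →L[ℂ] H} (hT : Good T) :
    ∃ φ : (H →L[ℂ] H) →L[ℂ] ℂ, ∀ N, φ N = trH (T * N) := by
  have sT := hT.summ
  obtain ⟨C, hC⟩ := hT
  refine ⟨LinearMap.mkContinuous
    { toFun := fun N => trH (T * N)
      map_add' := fun M N => by rw [mul_add, trH_add (sT M) (sT N)]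
      map_smul' := fun c N => by rw [mul_smul_comm, trH_smul]; rfl } C
      (fun N => (hC 1 N).2.2), fun N => rfl⟩

lemma Good.sub_mul {S T : H →L[ℂ] H} (hS : Good S) (hT : Good T) (N : H →L[ℂ] H) :
    trH ((S - T) * N) = trH (S * N) - trH (T * N) := by
  have : (S - T) * N = S * N + ((-1 : ℂ) • T) * N := by
    rw [neg_one_smul, _root_.sub_mul, neg_mul, sub_eq_add_neg]
  rw [this, trH_add (hS.summ N) ((hT.smul (-1)).summ N), smul_mul_assoc, trH_smul]
  ring

lemma Good.bdd {T : H →L[ℂ] H} (hT : Good T) :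
    BddAbove (Set.range fun B : {B : H →L[ℂ] H // ‖B‖ ≤ 1} => ‖trH (T * (B : H →L[ℂ] H))‖) := by
  obtain ⟨C, hC⟩ := hT
  refine ⟨|C|, ?_⟩
  rintro _ ⟨B, rfl⟩
  refine (hC 1 B).2.2.trans ?_
  have := B.2
  calc C * ‖(B : H →L[ℂ] H)‖ ≤ |C| * ‖(B : H →L[ℂ] H)‖ :=
        mul_le_mul_of_nonneg_right (le_abs_self C) (norm_nonneg _)
    _ ≤ |C| * 1 := mul_le_mul_of_nonneg_left this (abs_nonneg _)
    _ = |C| := mul_one _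

lemma Good.le_traceNorm {T : H →L[ℂ] H} (hT : Good T) (N : H →L[ℂ] H) :
    ‖trH (T * N)‖ ≤ traceNorm T * ‖N‖ := by
  by_cases hN : N = 0
  · subst hN
    simp [trH_eq]
  · have hn : 0 < ‖N‖ := norm_pos_iff.2 hN
    have h1 := le_ciSup hT.bdd ⟨((‖N‖ : ℂ)⁻¹) • N, by
      rw [norm_smul, norm_inv, Complex.norm_real, norm_norm, inv_mul_cancel₀ hn.ne']⟩
    simp only [mul_smul_comm, trH_smul] at h1
    rw [norm_mul, norm_inv, Complex.norm_real, norm_norm, inv_mul_le_iff₀ hn] at h1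
    rw [mul_comm]
    exact h1

lemma traceNorm_nonneg (T : H →L[ℂ] H) : 0 ≤ traceNorm T :=
  Real.iSup_nonneg fun _ => norm_nonneg _

lemma Good.norm_le {T : H →L[ℂ] H} (hT : Good T) : ‖T‖ ≤ traceNorm T := by
  refine ContinuousLinearMap.opNorm_le_of_re_inner_le (traceNorm_nonneg T) fun x y hx hy => ?_
  have h := hT.le_traceNorm (InnerProductSpace.rankOne ℂ x y)
  have e : trH (T * InnerProductSpace.rankOne ℂ x y) = ⟪y, T x⟫_ℂ := by
    rw [trH_eq, ← eB.tsum_inner_mul_inner]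
    congr 1; ext i
    simp [inner_smul_right]
  rw [e] at h
  have h3 : ‖InnerProductSpace.rankOne ℂ x y‖ ≤ 1 := by
    simp [hx, hy]
  calc RCLike.re ⟪T x, y⟫_ℂ ≤ ‖⟪T x, y⟫_ℂ‖ := RCLike.re_le_norm _
    _ = ‖⟪y, T x⟫_ℂ‖ := norm_inner_symm _ _
    _ ≤ _ := h
    _ ≤ traceNorm T * 1 := mul_le_mul_of_nonneg_left h3 (traceNorm_nonneg T)
    _ = _ := mul_one _

lemma trH_adjoint (T : H →L[ℂ] H) :
    trH (ContinuousLinearMap.adjoint T) = starRingEnd ℂ (trH T) := by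
  rw [trH_eq, trH_eq, Complex.conj_tsum]
  congr 1; ext i
  rw [ContinuousLinearMap.adjoint_inner_right, inner_conj_symm]

lemma good_of_pos {P : H →L[ℂ] H} (hP : 0 ≤ P) {ι : Type*} (b : HilbertBasis ι ℂ H)
    (h : Summable fun i => ‖⟪b i, P (b i)⟫_ℂ‖) : Good P := by
  have hs := CFC.sqrt_mul_sqrt_self P hP
  set S := CFC.sqrt P with hS
  have hS0 : 0 ≤ S := CFC.sqrt_nonneg P
  have hsa : ContinuousLinearMap.adjoint S = S :=
    ((ContinuousLinearMap.nonneg_iff_isPositive S).1 hS0).isSelfAdjoint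
  have h1 : Summable fun i => ‖S (b i)‖ ^ 2 := by
    refine h.congr fun i => ?_
    rw [← hs, mul_apply_eq_comp, ← ContinuousLinearMap.adjoint_inner_left, hsa,
      inner_self_eq_norm_sq_to_K]
    simp
  have h2 : HS2 S := by
    have := hs_swap b eB S h1
    rwa [hsa] at this
  rw [← hs]
  exact h2.good h2

lemma good_posPart {T : H →L[ℂ] H} (hT : IsSelfAdjoint T) (h : IsTraceClass T) : Good (T⁺) := by
  set P := T⁺ with hP
  set Q := T⁻ with hQ
  have hPQ : P - Q = T := CFC.posPart_sub_negPart T hT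
  have hPQ0 : P * Q = 0 := CFC.posPart_mul_negPart T
  have hP0 : 0 ≤ P := CFC.posPart_nonneg T
  set N : Submodule ℂ H := LinearMap.ker P.toLinearMap with hN
  have hNc : IsClosed (N : Set H) := P.isClosed_ker
  haveI : CompleteSpace N := hNc.completeSpace_coe
  obtain ⟨w0, b0, hb0⟩ := exists_hilbertBasis ℂ (Nᗮ : Submodule ℂ H)
  have horth : Orthonormal ℂ (Subtype.val : (Subtype.val '' w0 : Set H) → H) := by
    have h1 : Orthonormal ℂ (fun i : w0 => ((i : Nᗮ) : H)) := by
      have := b0.orthonormal.comp_linearIsometry (Nᗮ).subtypeₗᵢ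
      rw [hb0] at this
      exact this
    have := h1.toSubtypeRange
    have e : Set.range (fun i : w0 => ((i : Nᗮ) : H)) = Subtype.val '' w0 := by
      ext x; simp
    rwa [e] at this
  obtain ⟨w, b, hsub, hb⟩ := horth.exists_hilbertBasis_extension
  refine good_of_pos hP0 b (Summable.of_nonneg_of_le (fun i => norm_nonneg _) (fun i => ?_) (h w b))
  by_cases hi : (i : H) ∈ (Subtype.val '' w0 : Set H)
  · obtain ⟨u, hu, hui⟩ := hi
    have hbi : b i ∈ Nᗮ := by
      rw [hb, ← hui]; exact u.2
    have hQ : ⟪b i, Q (b i)⟫_ℂ = 0 := by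
      refine (Submodule.mem_orthogonal' _ _).1 hbi _ ?_
      have : (P * Q) (b i) = 0 := by rw [hPQ0]; rfl
      exact this
    rw [← hPQ, _root_.sub_apply, inner_sub_right, hQ, sub_zero]
  · have hz : b i ∈ N := by
      have : b i ∈ Nᗮᗮ := by
        rw [Submodule.mem_orthogonal]
        intro u hu
        have hd := b0.hasSum_repr ⟨u, hu⟩
        have hd2 := (hd.mapL (Nᗮ).subtypeL).mapL (innerSL ℂ (b i))
        have hz : ∀ j, (innerSL ℂ (b i)) ((Nᗮ).subtypeL (b0.repr ⟨u, hu⟩ j • b0 j)) = 0 := by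
          intro j
          simp only [map_smul, innerSL_apply_apply, Submodule.subtypeL_apply, hb0]
          have hj : (((j : Nᗮ) : H)) ∈ w := hsub ⟨_, j.2, rfl⟩
          have hne : i ≠ ⟨_, hj⟩ := by
            intro he
            apply hi
            rw [he]
            exact ⟨_, j.2, rfl⟩
          have := b.orthonormal.2 hne
          rw [hb] at this ⊢
          simp [this]
        simp only [hz] at hd2
        have := hd2.unique hasSum_zero
        rw [← inner_conj_symm]
        simp only [innerSL_apply_apply, Submodule.subtypeL_apply] at this
        rw [this]; simp
      rwa [Submodule.orthogonal_orthogonal] at this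
    have : P (b i) = 0 := hz
    rw [this]; simp

lemma IsTraceClass.smul {T : H →L[ℂ] H} (h : IsTraceClass T) (c : ℂ) : IsTraceClass (c • T) := by
  intro w b
  refine ((h w b).mul_left ‖c‖).congr fun i => ?_
  simp [inner_smul_right]

lemma IsTraceClass.add {S T : H →L[ℂ] H} (hS : IsTraceClass S) (h : IsTraceClass T) :
    IsTraceClass (S + T) := by
  intro w b
  refine Summable.of_nonneg_of_le (fun i => norm_nonneg _) (fun i => ?_) ((hS w b).add (h w b))
  simp only [_root_.add_apply, inner_add_right]
  exact norm_add_le _ _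

lemma IsTraceClass.adj {T : H →L[ℂ] H} (h : IsTraceClass T) :
    IsTraceClass (ContinuousLinearMap.adjoint T) := by
  intro w b
  refine (h w b).congr fun i => ?_
  rw [ContinuousLinearMap.adjoint_inner_right, norm_inner_symm]

lemma good_of_sa {T : H →L[ℂ] H} (hT : IsSelfAdjoint T) (h : IsTraceClass T) : Good T := by
  rw [← CFC.posPart_sub_negPart T hT, ← CFC.posPart_neg]
  refine (good_posPart hT h).sub (good_posPart hT.neg ?_)
  have := h.smul (-1)
  rwa [neg_one_smul] at this

lemma IsTraceClass.good {T : H →L[ℂ] H} (h : IsTraceClass T) : Good T := by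
  have h1 : Good (T + ContinuousLinearMap.adjoint T) := by
    refine good_of_sa ?_ (h.add h.adj)
    exact IsSelfAdjoint.add_star_self T
  have h2 : Good (Complex.I • (T + (-1 : ℂ) • ContinuousLinearMap.adjoint T)) := by
    refine good_of_sa ?_ ((h.add (h.adj.smul (-1))).smul _)
    rw [← ContinuousLinearMap.star_eq_adjoint]
    rw [IsSelfAdjoint, star_smul, star_add, star_smul, star_star]
    simp
    abel_nf
  have : T = (2⁻¹ : ℂ) • (T + ContinuousLinearMap.adjoint T) +
      (-(Complex.I * 2⁻¹)) • (Complex.I • (T + (-1 : ℂ) • ContinuousLinearMap.adjoint T)) := by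
    rw [smul_smul]
    have : -(Complex.I * 2⁻¹) * Complex.I = 2⁻¹ := by
      linear_combination (-2⁻¹ : ℂ) * Complex.I_mul_I
    rw [this]
    module
  rw [this]
  exact (h1.smul _).add (h2.smul _)

lemma hs_of_tc {K : H →L[ℂ] H} (h : IsTraceClass (K * ContinuousLinearMap.adjoint K)) : HS2 K := by
  have : HS2 (ContinuousLinearMap.adjoint K) := by
    refine (h _ eB).congr fun i => ?_
    rw [mul_apply_eq_comp, ← ContinuousLinearMap.adjoint_inner_left,
      inner_self_eq_norm_sq_to_K]
    simp
  have := this.adj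
  rwa [ContinuousLinearMap.adjoint_adjoint] at this


section banach

variable {A : Type*} [NormedRing A] [NormedAlgebra ℂ A] [CompleteSpace A]

/-- the scalar `1 + i t` -/
def cc (t : ℝ) : ℂ := 1 + (t : ℂ) * Complex.I

lemma cc_norm_sq (t : ℝ) : ‖cc t‖ ^ 2 = 1 + t ^ 2 := by
  rw [← Complex.normSq_eq_norm_sq, Complex.normSq_apply]
  simp [cc]; ring

lemma cc_ge {t : ℝ} (ht : 0 ≤ t) : (1 + t) / 2 ≤ ‖cc t‖ := by
  have := cc_norm_sq t
  refine abs_le_of_sq_le_sq' ?_ (norm_nonneg _) |>.2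
  nlinarith [sq_nonneg (1 - t)]

lemma cc_ne {t : ℝ} : cc t ≠ 0 := by
  intro h
  have := cc_norm_sq t
  rw [h] at this
  simp at this
  nlinarith [sq_nonneg t]

lemma cc_cont : Continuous cc := by unfold cc; fun_prop

/-- `(c + X)⁻¹` -/
def W (X : A) (t : ℝ) : A := Ring.inverse (cc t • (1 : A) + X)

lemma W_mul {X : A} {t : ℝ} (h : IsUnit (cc t • (1 : A) + X)) :
    W X t * (cc t • (1 : A) + X) = 1 := Ring.inverse_mul_cancel _ h

lemma mul_W {X : A} {t : ℝ} (h : IsUnit (cc t • (1 : A) + X)) :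
    (cc t • (1 : A) + X) * W X t = 1 := Ring.mul_inverse_cancel _ h

lemma W_contAt {X : A} {t : ℝ} (h : IsUnit (cc t • (1 : A) + X)) : ContinuousAt (W X) t := by
  obtain ⟨u, hu⟩ := h
  have h1 : ContinuousAt Ring.inverse (cc t • (1 : A) + X) := by
    rw [← hu]; exact NormedRing.inverse_continuousAt u
  have h2 : Continuous fun t : ℝ => cc t • (1 : A) + X :=
    (cc_cont.smul continuous_const).add continuous_const
  exact ContinuousAt.comp (f := fun t : ℝ => cc t • (1 : A) + X) h1 h2.continuousAt

lemma W_contOn {X : A} (h : ∀ t : ℝ, 0 ≤ t → IsUnit (cc t • (1 : A) + X)) :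
    ContinuousOn (W X) (Set.Ici 0) := fun t ht => (W_contAt (h t ht)).continuousWithinAt

lemma W_bound {X : A} (h : ∀ t : ℝ, 0 ≤ t → IsUnit (cc t • (1 : A) + X)) :
    ∃ C : ℝ, 0 < C ∧ ∀ t : ℝ, 0 ≤ t → ‖W X t‖ ≤ C / (1 + t) := by
  obtain ⟨B, hB⟩ := (isCompact_Icc (a := (0:ℝ)) (b := 4 * ‖X‖)).exists_bound_of_continuousOn
    ((W_contOn h).mono Set.Icc_subset_Ici_self)
  refine ⟨4 * ‖(1 : A)‖ + |B| * (1 + 4 * ‖X‖) + 1, by positivity, fun t ht => ?_⟩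
  rw [le_div_iff₀ (by positivity)]
  by_cases hc : t ≤ 4 * ‖X‖
  · have h1 := hB t ⟨ht, hc⟩
    have h2 : ‖W X t‖ * (1 + t) ≤ |B| * (1 + 4 * ‖X‖) :=
      mul_le_mul (h1.trans (le_abs_self B)) (by linarith) (by positivity) (abs_nonneg _)
    nlinarith [norm_nonneg (1 : A)]
  · push Not at hc
    have e : cc t • W X t = 1 - X * W X t := by
      have := mul_W (h t ht)
      rw [add_mul, smul_mul_assoc, one_mul] at this
      exact eq_sub_of_add_eq this
    have h1 : ‖cc t‖ * ‖W X t‖ ≤ ‖(1 : A)‖ + ‖X‖ * ‖W X t‖ := by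
      rw [← norm_smul, e]
      exact (norm_sub_le _ _).trans (add_le_add le_rfl (norm_mul_le _ _))
    have h2 := cc_ge ht
    have h3 : (1 + t) / 2 * ‖W X t‖ ≤ ‖cc t‖ * ‖W X t‖ :=
      mul_le_mul_of_nonneg_right h2 (norm_nonneg _)
    have h4 : ‖X‖ * ‖W X t‖ ≤ (1 + t) / 4 * ‖W X t‖ :=
      mul_le_mul_of_nonneg_right (by linarith) (norm_nonneg _)
    have h5 : 0 ≤ |B| * (1 + 4 * ‖X‖) := by positivity
    linarith

lemma W_sub {X Y : A} {t : ℝ} (hX : IsUnit (cc t • (1 : A) + X))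
    (hY : IsUnit (cc t • (1 : A) + Y)) : W X t - W Y t = W Y t * (Y - X) * W X t := by
  have e : Y - X = (cc t • (1 : A) + Y) - (cc t • (1 : A) + X) := by abel
  rw [e, mul_sub, W_mul hY, sub_mul, one_mul, mul_assoc, mul_W hX, mul_one]

lemma W_pert {X Y : A} {t C : ℝ} (hX : IsUnit (cc t • (1 : A) + X))
    (hY : IsUnit (cc t • (1 : A) + Y)) (hC : ‖W X t‖ ≤ C) (hd : ‖Y - X‖ * C ≤ 1 / 2) :
    ‖W Y t‖ ≤ 2 * ‖W X t‖ := by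
  have e : W Y t = W X t - W Y t * (Y - X) * W X t := by rw [← W_sub hX hY]; abel
  have h1 : ‖W Y t‖ ≤ ‖W X t‖ + ‖W Y t * (Y - X) * W X t‖ := by
    conv_lhs => rw [e]
    exact norm_sub_le _ _
  have h2 : ‖W Y t * (Y - X) * W X t‖ ≤ ‖W Y t‖ * (‖Y - X‖ * C) := by
    calc _ ≤ ‖W Y t * (Y - X)‖ * ‖W X t‖ := norm_mul_le _ _
      _ ≤ (‖W Y t‖ * ‖Y - X‖) * C :=
        mul_le_mul (norm_mul_le _ _) hC (norm_nonneg _) (by positivity)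
      _ = _ := by ring
  nlinarith [norm_nonneg (W Y t)]

lemma integ_aux {E : Type*} [NormedAddCommGroup E] {f : ℝ → E} {D : ℝ}
    (hf : ContinuousOn f (Set.Ici 0)) (hD : ∀ t : ℝ, 0 ≤ t → ‖f t‖ ≤ D * (1 + t ^ 2)⁻¹) :
    IntegrableOn f (Set.Ioi 0) := by
  refine Integrable.mono' ((integrable_inv_one_add_sq.const_mul D).integrableOn)
    ((hf.mono Set.Ioi_subset_Ici_self).aestronglyMeasurable measurableSet_Ioi) ?_
  exact (ae_restrict_mem measurableSet_Ioi).mono fun t ht => hD t (le_of_lt ht)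

lemma div_sq_le {t : ℝ} (ht : 0 ≤ t) {a b C D : ℝ} (hb : 0 ≤ b)
    (hC : 0 ≤ C) (hD : 0 ≤ D) (h1 : a ≤ C / (1 + t)) (h2 : b ≤ D / (1 + t)) :
    a * b ≤ C * D * (1 + t ^ 2)⁻¹ := by
  calc a * b ≤ C / (1 + t) * (D / (1 + t)) := mul_le_mul h1 h2 hb (by positivity)
    _ = C * D * ((1 + t) ^ 2)⁻¹ := by field_simp
    _ ≤ C * D * (1 + t ^ 2)⁻¹ := by
      refine mul_le_mul_of_nonneg_left (inv_anti₀ (by positivity) (by nlinarith)) (by positivity)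

lemma WW_int {X Y : A} (hX : ∀ t : ℝ, 0 ≤ t → IsUnit (cc t • (1 : A) + X))
    (hY : ∀ t : ℝ, 0 ≤ t → IsUnit (cc t • (1 : A) + Y)) :
    IntegrableOn (fun t => W X t * W Y t) (Set.Ioi 0) := by
  obtain ⟨C, hC0, hC⟩ := W_bound hX
  obtain ⟨D, hD0, hD⟩ := W_bound hY
  refine integ_aux (D := C * D) ((W_contOn hX).mul (W_contOn hY)) fun t ht => ?_
  exact (norm_mul_le _ _).trans (div_sq_le ht (norm_nonneg _) hC0.le hD0.le (hC t ht) (hD t ht))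

lemma cW_int {X : A} (hX : ∀ t : ℝ, 0 ≤ t → IsUnit (cc t • (1 : A) + X)) (R : A) :
    IntegrableOn (fun t => (cc t)⁻¹ • (W X t * R)) (Set.Ioi 0) := by
  obtain ⟨C, hC0, hC⟩ := W_bound hX
  refine integ_aux (D := 2 * (C * ‖R‖)) ?_ fun t ht => ?_
  · exact (cc_cont.inv₀ (fun t => cc_ne)).continuousOn.smul
      ((W_contOn hX).mul continuousOn_const)
  · rw [norm_smul]
    refine div_sq_le ht (norm_nonneg _) (by norm_num) (by positivity) ?_ ?_
    · have := cc_ge ht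
      rw [norm_inv]
      calc ‖cc t‖⁻¹ ≤ ((1 + t) / 2)⁻¹ := inv_anti₀ (by positivity) this
        _ = _ := by rw [inv_div]
    · refine (norm_mul_le _ _).trans ?_
      rw [mul_div_right_comm]
      exact mul_le_mul_of_nonneg_right (hC t ht) (norm_nonneg _)

lemma W_hasDeriv {X : A} {t : ℝ} (h : IsUnit (cc t • (1 : A) + X)) :
    HasDerivAt (W X) (-(Complex.I • (W X t * W X t))) t := by
  have h2 : HasDerivAt (fun t : ℝ => cc t • (1 : A) + X) (Complex.I • (1 : A)) t := by
    have h3 : HasDerivAt cc Complex.I t := by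
      have := ((Complex.ofRealCLM.hasDerivAt (x := t)).mul_const Complex.I).const_add 1
      have e : cc = fun x : ℝ => 1 + Complex.ofRealCLM x * Complex.I := by ext x; simp [cc]
      rw [e]
      have e2 : Complex.ofRealCLM 1 * Complex.I = Complex.I := by simp
      rw [e2] at this
      exact this
    exact (h3.smul_const (1 : A)).add_const X
  obtain ⟨u, hu⟩ := h
  have h1 := hasFDerivAt_ringInverse (𝕜 := ℝ) u
  rw [hu] at h1
  have h3 := HasFDerivAt.comp_hasDerivAt t h1 h2
  have e : W X t = (↑u⁻¹ : A) := by
    rw [W, ← hu, Ring.inverse_unit]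
  rw [e]
  have h4 : HasDerivAt (W X) _ t := h3
  convert h4 using 1
  simp [ContinuousLinearMap.mulLeftRight_apply]

lemma int_WW {X : A} (hX : ∀ t : ℝ, 0 ≤ t → IsUnit (cc t • (1 : A) + X)) :
    ∫ t in Set.Ioi (0:ℝ), W X t * W X t = -(Complex.I • W X 0) := by
  obtain ⟨C, hC0, hC⟩ := W_bound hX
  have hint := (WW_int hX hX).smul (Complex.I)
  have ht : Tendsto (W X) atTop (𝓝 0) := by
    refine squeeze_zero_norm' ((eventually_ge_atTop 0).mono hC) ?_
    exact Tendsto.const_div_atTop (tendsto_atTop_add_const_left _ _ tendsto_id) C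
  have := integral_Ioi_of_hasDerivAt_of_tendsto (f := fun t => - W X t)
    (f' := fun t => Complex.I • (W X t * W X t)) (a := 0) (m := 0)
    ((W_contAt (hX 0 le_rfl)).neg.continuousWithinAt)
    (fun t ht => by
      have := (W_hasDeriv (hX t (le_of_lt ht))).neg
      rw [neg_neg] at this
      exact this) hint (by simpa using ht.neg)
  rw [integral_smul] at this
  have h2 := congrArg (fun y => (-Complex.I) • y) this
  simp only [smul_smul] at h2
  simpa using h2

lemma WW_tendsto {ι : Type*} {l : Filter ι} {X : A} {Y : ι → A}
    (hX : ∀ t : ℝ, 0 ≤ t → IsUnit (cc t • (1 : A) + X))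
    (hY : ∀ᶠ i in l, ∀ t : ℝ, 0 ≤ t → IsUnit (cc t • (1 : A) + Y i))
    (hl : Tendsto Y l (𝓝 X)) :
    Tendsto (fun i => ∫ t in Set.Ioi (0:ℝ), W X t * W (Y i) t) l
      (𝓝 (∫ t in Set.Ioi (0:ℝ), W X t * W X t)) := by
  obtain ⟨C, hC0, hC⟩ := W_bound hX
  have hl0 : Tendsto (fun i => ‖Y i - X‖) l (𝓝 0) := by
    have := (hl.sub_const X).norm
    simpa using this
  have hsm : ∀ᶠ i in l, ‖Y i - X‖ * C ≤ 1 / 2 := by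
    have h1 := hl0.mul_const C
    rw [zero_mul] at h1
    exact (h1.eventually (gt_mem_nhds (by norm_num : (0:ℝ) < 1 / 2))).mono fun i hi => hi.le
  have hCt : ∀ t : ℝ, 0 ≤ t → C / (1 + t) ≤ C := fun t ht => div_le_self hC0.le (by linarith)
  rw [tendsto_iff_norm_sub_tendsto_zero]
  refine squeeze_zero' (Eventually.of_forall fun i => norm_nonneg _)
    (g := fun i => ‖Y i - X‖ * ∫ t in Set.Ioi (0:ℝ), (2 * C ^ 3) * (1 + t ^ 2)⁻¹) ?_ ?_
  · filter_upwards [hY, hsm] with i hi hs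
    rw [← integral_sub (WW_int hX hi) (WW_int hX hX), ← integral_const_mul]
    refine norm_integral_le_of_norm_le
      (((integrable_inv_one_add_sq.const_mul _).const_mul _).integrableOn) ?_
    refine (ae_restrict_mem measurableSet_Ioi).mono fun t ht => ?_
    have ht : 0 ≤ t := le_of_lt ht
    have hp := W_pert (hX t ht) (hi t ht) ((hC t ht).trans (hCt t ht)) hs
    rw [← mul_sub, ← neg_sub, W_sub (hX t ht) (hi t ht)]
    have h1 : ‖W X t * -(W (Y i) t * (Y i - X) * W X t)‖ ≤
        ‖W X t‖ * ((2 * ‖W X t‖) * ‖Y i - X‖ * ‖W X t‖) := by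
      refine (norm_mul_le _ _).trans (mul_le_mul_of_nonneg_left ?_ (norm_nonneg _))
      rw [norm_neg]
      refine (norm_mul_le _ _).trans (mul_le_mul_of_nonneg_right ?_ (norm_nonneg _))
      refine (norm_mul_le _ _).trans (mul_le_mul_of_nonneg_right hp (norm_nonneg _))
    have h2 : ‖W X t‖ * ‖W X t‖ ≤ C * C * (1 + t ^ 2)⁻¹ :=
      div_sq_le ht (norm_nonneg _) hC0.le hC0.le (hC t ht) (hC t ht)
    have h3 : ‖W X t‖ ≤ C := (hC t ht).trans (hCt t ht)
    have h4 : ‖W X t‖ * ‖W X t‖ * ‖W X t‖ ≤ C * C * (1 + t ^ 2)⁻¹ * C :=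
      mul_le_mul h2 h3 (norm_nonneg _) (by positivity)
    calc _ ≤ _ := h1
      _ = ‖Y i - X‖ * (2 * (‖W X t‖ * ‖W X t‖ * ‖W X t‖)) := by ring
      _ ≤ ‖Y i - X‖ * (2 * (C * C * (1 + t ^ 2)⁻¹ * C)) := by gcongr
      _ = _ := by ring
  · have := hl0.mul_const (∫ t in Set.Ioi (0:ℝ), (2 * C ^ 3) * (1 + t ^ 2)⁻¹)
    rwa [zero_mul] at this

end banach


lemma res_adj (S : SelfAdjointOp H) {z : ℂ} (hz : z.im ≠ 0) :
    ContinuousLinearMap.adjoint (S.resolvent z) = S.resolvent (starRingEnd ℂ z) := by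
  have hz' : (starRingEnd ℂ z).im ≠ 0 := by simpa using hz
  symm
  rw [ContinuousLinearMap.eq_adjoint_iff]
  intro y x
  have e1 := S.op_resolvent hz x
  have e2 := S.op_resolvent hz' y
  have e3 := S.symmetric ⟨_, S.resolvent_mem hz' y⟩ ⟨_, S.resolvent_mem hz x⟩
  simp only at e3
  conv_lhs => rw [← e1]
  conv_rhs => rw [← e2]
  rw [inner_sub_right, inner_sub_left, e3, inner_smul_left, inner_smul_right]
  simp

lemma res_im (S : SelfAdjointOp H) {z : ℂ} (hz : 0 < z.im) (y : H) :
    0 ≤ (⟪y, S.resolvent z y⟫_ℂ).im := by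
  have e1 := S.op_resolvent hz.ne' y
  have e3 := S.symmetric ⟨_, S.resolvent_mem hz.ne' y⟩ ⟨_, S.resolvent_mem hz.ne' y⟩
  simp only at e3
  have h0 : (⟪S.op ⟨_, S.resolvent_mem hz.ne' y⟩, S.resolvent z y⟫_ℂ).im = 0 := by
    rw [← Complex.conj_eq_iff_im, inner_conj_symm, e3]
  have h2 : ⟪y, S.resolvent z y⟫_ℂ = ⟪S.op ⟨_, S.resolvent_mem hz.ne' y⟩, S.resolvent z y⟫_ℂ -
      starRingEnd ℂ z * (‖S.resolvent z y‖ : ℂ) ^ 2 := by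
    have key : ⟪y, S.resolvent z y⟫_ℂ = ⟪S.op ⟨_, S.resolvent_mem hz.ne' y⟩ - z • S.resolvent z y,
        S.resolvent z y⟫_ℂ := by rw [e1]
    rw [key, inner_sub_left, inner_smul_left, inner_self_eq_norm_sq_to_K]
    simp
  rw [h2, Complex.sub_im, h0]
  rw [← Complex.ofReal_pow, Complex.im_mul_ofReal]
  simp
  positivity

lemma res_id1 {B S : SelfAdjointOp H} {V : H →L[ℂ] H} (h : IsSumOf B S V) {z : ℂ}
    (hz : z.im ≠ 0) : S.resolvent z = B.resolvent z + S.resolvent z * V * B.resolvent z := by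
  ext x
  have hm : B.resolvent z x ∈ S.dom := h.1 ▸ B.resolvent_mem hz x
  have e1 := B.op_resolvent hz x
  rw [h.2 _ _ hm] at e1
  have e2 := S.resolvent_op hz ⟨_, hm⟩
  simp only at e2
  have e3 : x = (S.op ⟨_, hm⟩ - z • B.resolvent z x) + V (B.resolvent z x) := by
    refine e1.symm.trans ?_
    abel
  conv_lhs => rw [e3]
  rw [map_add, e2]
  rfl

lemma res_id2 {B S : SelfAdjointOp H} {V : H →L[ℂ] H} (h : IsSumOf B S V) {z : ℂ}
    (hz : z.im ≠ 0) : S.resolvent z = B.resolvent z + B.resolvent z * V * S.resolvent z := by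
  ext x
  have hm0 := S.resolvent_mem hz x
  have hm : S.resolvent z x ∈ B.dom := h.1.symm ▸ hm0
  have e1 := S.op_resolvent hz x
  have e2 := B.resolvent_op hz ⟨_, hm⟩
  simp only at e2
  rw [h.2 _ _ hm0] at e2
  have e3 : S.op ⟨_, hm0⟩ + V (S.resolvent z x) - z • S.resolvent z x
    = x + V (S.resolvent z x) := by
    rw [add_sub_right_comm, e1]
  rw [e3, map_add] at e2
  exact e2.symm

lemma unit0 {B S : SelfAdjointOp H} {V : H →L[ℂ] H} (h : IsSumOf B S V) {z : ℂ}
    (hz : z.im ≠ 0) : IsUnit (cc 0 • (1 : H →L[ℂ] H) + S.resolvent z * V) := by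
  have e : cc 0 • (1 : H →L[ℂ] H) = 1 := by simp [cc]
  rw [e]
  have e1 := res_id1 h hz
  have e2 := res_id2 h hz
  set R := B.resolvent z
  set R0 := S.resolvent z
  refine ⟨⟨1 + R0 * V, 1 - R * V, ?_, ?_⟩, rfl⟩
  · have : (1 + R0 * V) * (1 - R * V) = 1 + (R0 - (R + R0 * V * R)) * V := by noncomm_ring
    rw [this, ← e1]; simp
  · have : (1 - R * V) * (1 + R0 * V) = 1 + (R0 - (R + R * V * R0)) * V := by noncomm_ring
    rw [this, ← e2]; simp

lemma W0_mul {B S : SelfAdjointOp H} {V : H →L[ℂ] H} (h : IsSumOf B S V) {z : ℂ}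
    (hz : z.im ≠ 0) : W (S.resolvent z * V) 0 * S.resolvent z = B.resolvent z := by
  have e1 := res_id1 h hz
  have : S.resolvent z = (cc 0 • (1 : H →L[ℂ] H) + S.resolvent z * V) * B.resolvent z := by
    have e : cc 0 • (1 : H →L[ℂ] H) = 1 := by simp [cc]
    rw [e, add_mul, one_mul, ← e1]
  refine (congrArg (fun y => W (S.resolvent z * V) 0 * y) this).trans ?_
  rw [← mul_assoc, W_mul (unit0 h hz), one_mul]

lemma unitPhi (S : SelfAdjointOp H) (K : H →L[ℂ] H) {z : ℂ} (hz : 0 < z.im) {t : ℝ} (ht : 0 < t) :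
    IsUnit (cc t • (1 : H →L[ℂ] H) + ContinuousLinearMap.adjoint K * S.resolvent z * K) := by
  refine ContinuousLinearMap.isUnit_of_forall_le_norm_inner_map _ (c := ⟨t, ht.le⟩) ht fun x => ?_
  rw [norm_inner_symm]
  refine le_trans ?_ (Complex.abs_im_le_norm _)
  refine le_trans ?_ (le_abs_self _)
  have e : ⟪x, (cc t • (1 : H →L[ℂ] H) + ContinuousLinearMap.adjoint K * S.resolvent z * K) x⟫_ℂ
      = cc t * ((‖x‖ ^ 2 : ℝ) : ℂ) + ⟪K x, S.resolvent z (K x)⟫_ℂ := by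
    rw [← ContinuousLinearMap.adjoint_inner_right]
    simp only [_root_.add_apply, inner_add_right]
    congr 1
    change ⟪x, cc t • x⟫_ℂ = _
    rw [inner_smul_right, inner_self_eq_norm_sq_to_K]
    simp
  rw [e, Complex.add_im, Complex.im_mul_ofReal]
  have := res_im S hz (K x)
  have h3 : (cc t).im = t := by simp [cc]
  rw [h3]
  change ‖x‖ ^ 2 * t ≤ _
  linarith

lemma unitX {S : SelfAdjointOp H} {K : H →L[ℂ] H} {z : ℂ} (hz : 0 < z.im) {B : SelfAdjointOp H}
    (h : IsSumOf B S (K * ContinuousLinearMap.adjoint K)) {t : ℝ} (ht : 0 ≤ t) :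
    IsUnit (cc t • (1 : H →L[ℂ] H) + S.resolvent z * (K * ContinuousLinearMap.adjoint K)) := by
  rcases ht.eq_or_lt with rfl | ht
  · exact unit0 h hz.ne'
  have hu := unitPhi S K hz ht
  set R0 := S.resolvent z
  set Ks := ContinuousLinearMap.adjoint K
  obtain ⟨u, hu⟩ := hu
  have h1 := u.mul_inv
  have h2 := u.inv_mul
  set w : H →L[ℂ] H := ↑u⁻¹
  rw [hu] at h1 h2
  set c := cc t with hc
  have hcn : c ≠ 0 := cc_ne
  have h1' : c • w = 1 - Ks * R0 * K * w := by
    rw [add_mul, smul_mul_assoc, one_mul] at h1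
    exact eq_sub_of_add_eq h1
  have h2' : c • w = 1 - w * (Ks * R0 * K) := by
    rw [mul_add, mul_smul_comm, mul_one] at h2
    exact eq_sub_of_add_eq h2
  refine ⟨⟨c • (1 : H →L[ℂ] H) + R0 * (K * Ks), c⁻¹ • (1 - R0 * K * w * Ks), ?_, ?_⟩, rfl⟩
  · have : (c • (1 : H →L[ℂ] H) + R0 * (K * Ks)) * (1 - R0 * K * w * Ks) = c • 1 +
        R0 * K * (1 - Ks * R0 * K * w - c • w) * Ks := by
      simp only [mul_sub, sub_mul, add_mul, mul_one, smul_mul_assoc, one_mul, mul_smul_comm,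
        mul_assoc]
      abel
    rw [mul_smul_comm, this, h1', sub_self, mul_zero, zero_mul, add_zero, smul_smul,
      inv_mul_cancel₀ hcn, one_smul]
  · have : (1 - R0 * K * w * Ks) * (c • (1 : H →L[ℂ] H) + R0 * (K * Ks)) = c • 1 +
        R0 * K * (1 - w * (Ks * R0 * K) - c • w) * Ks := by
      simp only [mul_sub, sub_mul, mul_add, add_mul, mul_one, smul_mul_assoc, one_mul,
        mul_smul_comm, mul_assoc, smul_sub]
      abel
    rw [smul_mul_assoc, this, h2', sub_self, mul_zero, zero_mul, add_zero, smul_smul,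
      inv_mul_cancel₀ hcn, one_smul]

lemma logInt_eq {S : SelfAdjointOp H} {K : H →L[ℂ] H} {z : ℂ} (hz : 0 < z.im)
    {B : SelfAdjointOp H}
    (h : IsSumOf B S (K * ContinuousLinearMap.adjoint K)) {t : ℝ} (ht : 0 < t) :
    logIntegrand (1 + ContinuousLinearMap.adjoint K * S.resolvent z * K) t =
      ContinuousLinearMap.adjoint K * (-((cc t)⁻¹ •
        (W (S.resolvent z * (K * ContinuousLinearMap.adjoint K)) t * S.resolvent z))) * K := by
  have hu := unitPhi S K hz ht
  have hx := unitX hz h ht.le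
  set R0 := S.resolvent z
  set Ks := ContinuousLinearMap.adjoint K
  have e : (1 + Ks * R0 * K) + ((t : ℂ) * Complex.I) • (1 : H →L[ℂ] H)
      = cc t • (1 : H →L[ℂ] H) + Ks * R0 * K := by
    rw [cc, add_smul, one_smul]; abel
  have e' : logIntegrand (1 + Ks * R0 * K) t = W (Ks * R0 * K) t - (cc t)⁻¹ • 1 := by
    rw [logIntegrand, e]; rfl
  rw [e']
  have i1 : W (Ks * R0 * K) t * Ks = Ks * W (R0 * (K * Ks)) t := by
    have a : (cc t • (1 : H →L[ℂ] H) + Ks * R0 * K) * Ks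
        = Ks * (cc t • (1 : H →L[ℂ] H) + R0 * (K * Ks)) := by
      simp only [mul_add, add_mul, mul_one, smul_mul_assoc, one_mul, mul_smul_comm, mul_assoc]
    have m1 := W_mul hu
    have m2 := mul_W hx
    generalize W (Ks * R0 * K) t = w1 at m1
    generalize W (R0 * (K * Ks)) t = w2 at m2
    calc w1 * Ks = w1 * (Ks * ((cc t • (1 : H →L[ℂ] H) + R0 * (K * Ks)) * w2)) := by
          rw [m2, mul_one]
      _ = w1 * ((cc t • (1 : H →L[ℂ] H) + Ks * R0 * K) * Ks) * w2 := by
          rw [a, mul_assoc w1, mul_assoc Ks]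
      _ = Ks * w2 := by rw [← mul_assoc w1, m1, one_mul]
  have i2 : W (Ks * R0 * K) t - (cc t)⁻¹ • 1 = -((cc t)⁻¹ • (W (Ks * R0 * K) t * (Ks * R0 * K))) := by
    have a := W_mul hu
    rw [mul_add, mul_smul_comm, mul_one] at a
    rw [← a, smul_add, smul_smul, inv_mul_cancel₀ cc_ne, one_smul]
    abel
  rw [i2, ← mul_assoc, ← mul_assoc, i1]
  simp only [mul_neg, neg_mul, smul_mul_assoc, mul_smul_comm, mul_assoc]

/-- `L` -/
def Lop (R0 V : H →L[ℂ] H) : H →L[ℂ] H :=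
  Complex.I • ∫ t in Set.Ioi (0:ℝ), (cc t)⁻¹ • (W (R0 * V) t * R0)

lemma opLog_eq {S : SelfAdjointOp H} {K : H →L[ℂ] H} {z : ℂ} (hz : 0 < z.im)
    {B : SelfAdjointOp H}
    (h : IsSumOf B S (K * ContinuousLinearMap.adjoint K)) :
    opLog (1 + ContinuousLinearMap.adjoint K * S.resolvent z * K) =
      ContinuousLinearMap.adjoint K *
        Lop (S.resolvent z) (K * ContinuousLinearMap.adjoint K) * K := by
  have hint := cW_int (fun t ht => unitX hz h (t := t) ht) (S.resolvent z)
  set R0 := S.resolvent z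
  set Ks := ContinuousLinearMap.adjoint K
  set N : ℝ → H →L[ℂ] H := fun t => (cc t)⁻¹ • (W (R0 * (K * Ks)) t * R0) with hN
  set Λ := ContinuousLinearMap.mulLeftRight ℂ (H →L[ℂ] H) Ks K with hΛ
  have hΛa : ∀ y, Λ y = Ks * y * K := fun y => rfl
  have hint2 : IntegrableOn (fun t => Λ (- N t)) (Set.Ioi 0) := Λ.integrable_comp hint.neg
  have hli : IntegrableOn (logIntegrand (1 + Ks * R0 * K)) (Set.Ioi 0) := by
    refine hint2.congr_fun (fun t ht => ?_) measurableSet_Ioi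
    exact (logInt_eq hz h ht).symm
  have ht := (intervalIntegral_tendsto_integral_Ioi 0 hli tendsto_id).const_smul (-Complex.I)
  simp only [id] at ht
  rw [opLog, Tendsto.limUnder_eq ht]
  have e : ∫ t in Set.Ioi (0:ℝ), logIntegrand (1 + Ks * R0 * K) t =
      ∫ t in Set.Ioi (0:ℝ), Λ (- N t) :=
    setIntegral_congr_fun measurableSet_Ioi fun t ht => logInt_eq hz h ht
  have e2 : ∫ t in Set.Ioi (0:ℝ), Λ (- N t) = - (Ks * (∫ t in Set.Ioi (0:ℝ), N t) * K) := by
    simp only [map_neg]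
    rw [integral_neg, ContinuousLinearMap.integral_comp_comm Λ hint, hΛa]
  rw [e, e2, Lop]
  simp
  rfl

lemma tr_opLog {S : SelfAdjointOp H} {K : H →L[ℂ] H} {z : ℂ} (hz : 0 < z.im)
    {B : SelfAdjointOp H}
    (h : IsSumOf B S (K * ContinuousLinearMap.adjoint K))
    (hK : IsTraceClass (K * ContinuousLinearMap.adjoint K)) :
    trH (opLog (1 + ContinuousLinearMap.adjoint K * S.resolvent z * K)) =
      Complex.I * ∫ t in Set.Ioi (0:ℝ), (cc t)⁻¹ * trH (K * ContinuousLinearMap.adjoint K *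
        (W (S.resolvent z * (K * ContinuousLinearMap.adjoint K)) t * S.resolvent z)) ∧
    IntegrableOn (fun t => (cc t)⁻¹ * trH (K * ContinuousLinearMap.adjoint K *
        (W (S.resolvent z * (K * ContinuousLinearMap.adjoint K)) t * S.resolvent z)))
      (Set.Ioi 0) := by
  have hint := cW_int (fun t ht => unitX hz h (t := t) ht) (S.resolvent z)
  have hs := hs_of_tc hK
  have hg := hK.good
  obtain ⟨φ, hφ⟩ := hg.exists_clm
  have e0 : ∀ t, φ ((cc t)⁻¹ • (W (S.resolvent z * (K * ContinuousLinearMap.adjoint K)) t *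
      S.resolvent z)) = (cc t)⁻¹ * trH (K * ContinuousLinearMap.adjoint K *
        (W (S.resolvent z * (K * ContinuousLinearMap.adjoint K)) t * S.resolvent z)) := by
    intro t
    rw [map_smul, hφ, smul_eq_mul]
  constructor
  · rw [opLog_eq hz h, mul_assoc, hs.adj.tr_comm (hs.mul_left _), mul_assoc, ← hg.comm, Lop,
      mul_smul_comm, trH_smul, ← hφ, ← ContinuousLinearMap.integral_comp_comm φ hint]
    simp only [e0]
  · have := φ.integrable_comp hint
    simp only [e0] at this
    exact this

lemma tr_diff {R0 V1 V2 : H →L[ℂ] H} (h1 : Good V1) (h2 : Good V2) {t : ℝ}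
    (u1 : IsUnit (cc t • (1 : H →L[ℂ] H) + R0 * V1))
    (u2 : IsUnit (cc t • (1 : H →L[ℂ] H) + R0 * V2)) :
    trH (V2 * (W (R0 * V2) t * R0)) - trH (V1 * (W (R0 * V1) t * R0)) =
      cc t * trH ((V2 - V1) * (W (R0 * V1) t * W (R0 * V2) t * R0)) := by
  have a1 := W_mul u1
  have a2 := W_mul u2
  have a3 := W_sub u1 u2
  rw [mul_add, mul_smul_comm, mul_one] at a1 a2
  have a4 : W (R0 * V2) t * R0 * V2 = W (R0 * V1) t * R0 * V1 +
      cc t • (W (R0 * V2) t * R0 * (V2 - V1) * W (R0 * V1) t) := by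
    have : W (R0 * V2) t * R0 * (V2 - V1) * W (R0 * V1) t = W (R0 * V1) t - W (R0 * V2) t := by
      rw [a3]; noncomm_ring
    rw [this, smul_sub]
    have b1 := eq_sub_of_add_eq' a1
    have b2 := eq_sub_of_add_eq' a2
    rw [mul_assoc, mul_assoc, b1, b2]
    abel
  have hg := h2.sub h1
  have e : W (R0 * V1) t * W (R0 * V2) t * R0 = W (R0 * V1) t * (W (R0 * V2) t * R0) :=
    mul_assoc _ _ _
  rw [e, ← hg.cyc, ← trH_smul, h2.comm, h1.comm, a4]
  obtain ⟨C1, hC1⟩ := h1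
  obtain ⟨C2, hC2⟩ := hg.smul (cc t)
  have s1 := (hC1 (W (R0 * V1) t * R0) 1).1
  have s2 := (hC2 (W (R0 * V2) t * R0) (W (R0 * V1) t)).1
  rw [mul_one] at s1
  rw [mul_smul_comm, smul_mul_assoc] at s2
  rw [trH_add s1 s2]
  ring

lemma tr_opLog_diff {S B1 B2 : SelfAdjointOp H} {K1 K2 : H →L[ℂ] H} {z : ℂ} (hz : 0 < z.im)
    (h1 : IsSumOf B1 S (K1 * ContinuousLinearMap.adjoint K1))
    (h2 : IsSumOf B2 S (K2 * ContinuousLinearMap.adjoint K2))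
    (hK1 : IsTraceClass (K1 * ContinuousLinearMap.adjoint K1))
    (hK2 : IsTraceClass (K2 * ContinuousLinearMap.adjoint K2)) :
    trH (opLog (1 + ContinuousLinearMap.adjoint K2 * S.resolvent z * K2)) -
      trH (opLog (1 + ContinuousLinearMap.adjoint K1 * S.resolvent z * K1)) =
    trH ((K2 * ContinuousLinearMap.adjoint K2 - K1 * ContinuousLinearMap.adjoint K1) *
      ((Complex.I • ∫ t in Set.Ioi (0:ℝ), W (S.resolvent z * (K1 * ContinuousLinearMap.adjoint K1)) t
        * W (S.resolvent z * (K2 * ContinuousLinearMap.adjoint K2)) t) * S.resolvent z)) := by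
  have u1 := fun t ht => unitX hz h1 (t := t) ht
  have u2 := fun t ht => unitX hz h2 (t := t) ht
  obtain ⟨a1, b1⟩ := tr_opLog hz h1 hK1
  obtain ⟨a2, b2⟩ := tr_opLog hz h2 hK2
  have g1 := hK1.good
  have g2 := hK2.good
  rw [a1, a2]
  set V1 := K1 * ContinuousLinearMap.adjoint K1
  set V2 := K2 * ContinuousLinearMap.adjoint K2
  set R0 := S.resolvent z
  obtain ⟨φ, hφ⟩ := (g2.sub g1).exists_clm
  have hint := WW_int u1 u2
  set Ψ : (H →L[ℂ] H) →L[ℂ] ℂ := φ.comp ((ContinuousLinearMap.mul ℂ (H →L[ℂ] H)).flip R0) with hΨ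
  have hΨa : ∀ y, Ψ y = trH ((V2 - V1) * (y * R0)) := fun y => by rw [← hφ]; rfl
  rw [← mul_sub, ← integral_sub b2 b1, smul_mul_assoc, mul_smul_comm, trH_smul, ← hΨa,
    ← ContinuousLinearMap.integral_comp_comm Ψ hint]
  congr 1
  refine setIntegral_congr_fun measurableSet_Ioi fun t ht => ?_
  have := tr_diff g1 g2 (u1 t (le_of_lt ht)) (u2 t (le_of_lt ht))
  simp only [hΨa]
  rw [← mul_sub, this, ← mul_assoc, inv_mul_cancel₀ cc_ne, one_mul]


lemma aux_star {V : H →L[ℂ] H} (hV : ContinuousLinearMap.adjoint V = V) (S : SelfAdjointOp H)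
    {z : ℂ} (hz : z.im ≠ 0) (hg : Good V) :
    starRingEnd ℂ (trH (V * S.resolvent (starRingEnd ℂ z))) = trH (V * S.resolvent z) := by
  have hz' : (starRingEnd ℂ z).im ≠ 0 := by simpa using hz
  rw [← trH_adjoint]
  have : ContinuousLinearMap.adjoint (V * S.resolvent (starRingEnd ℂ z)) =
      S.resolvent z * V := by
    have := ContinuousLinearMap.adjoint_comp V (S.resolvent (starRingEnd ℂ z))
    rw [hV, res_adj S hz', Complex.conj_conj] at this
    exact this
  rw [this, hg.comm]

lemma adj_KK (K : H →L[ℂ] H) : ContinuousLinearMap.adjoint (K * ContinuousLinearMap.adjoint K) =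
    K * ContinuousLinearMap.adjoint K := by
  have := ContinuousLinearMap.adjoint_comp K (ContinuousLinearMap.adjoint K)
  rw [ContinuousLinearMap.adjoint_adjoint] at this
  exact this

lemma diff_tendsto {Ω : Set ℝ} (hΩo : IsOpen Ω) (K : ℝ → H →L[ℂ] H) {V' : H →L[ℂ] H}
    (hV : ∀ s ∈ Ω, IsTraceClass (K s * ContinuousLinearMap.adjoint (K s))) {s : ℝ} (hs : s ∈ Ω)
    (hg : Good V')
    (hV' : Tendsto (fun h : ℝ => traceNorm (((h : ℂ))⁻¹ •
          (K (s + h) * ContinuousLinearMap.adjoint (K (s + h)) -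
            K s * ContinuousLinearMap.adjoint (K s)) - V'))
        (𝓝[≠] (0 : ℝ)) (𝓝 0)) :
    (∀ᶠ h in 𝓝[≠] (0 : ℝ), s + h ∈ Ω ∧ Good (((h : ℂ))⁻¹ •
          (K (s + h) * ContinuousLinearMap.adjoint (K (s + h)) -
            K s * ContinuousLinearMap.adjoint (K s)) - V')) ∧
    Tendsto (fun h : ℝ => ((h : ℂ))⁻¹ •
          (K (s + h) * ContinuousLinearMap.adjoint (K (s + h)) -
            K s * ContinuousLinearMap.adjoint (K s))) (𝓝[≠] (0 : ℝ)) (𝓝 V') ∧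
    Tendsto (fun h : ℝ => K (s + h) * ContinuousLinearMap.adjoint (K (s + h)))
      (𝓝[≠] (0 : ℝ)) (𝓝 (K s * ContinuousLinearMap.adjoint (K s))) := by
  have h1 : ∀ᶠ h in 𝓝[≠] (0 : ℝ), s + h ∈ Ω ∧ Good (((h : ℂ))⁻¹ •
          (K (s + h) * ContinuousLinearMap.adjoint (K (s + h)) -
            K s * ContinuousLinearMap.adjoint (K s)) - V') := by
    have hc : ContinuousAt (fun h : ℝ => s + h) 0 := by fun_prop
    have : ∀ᶠ h in 𝓝 (0 : ℝ), s + h ∈ Ω :=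
      hc.eventually_mem (hΩo.mem_nhds (by simpa using hs))
    filter_upwards [nhdsWithin_le_nhds this] with h hh
    exact ⟨hh, (((hV _ hh).good.sub (hV _ hs).good).smul _).sub hg⟩
  have h2 : Tendsto (fun h : ℝ => ((h : ℂ))⁻¹ •
          (K (s + h) * ContinuousLinearMap.adjoint (K (s + h)) -
            K s * ContinuousLinearMap.adjoint (K s))) (𝓝[≠] (0 : ℝ)) (𝓝 V') := by
    rw [tendsto_iff_norm_sub_tendsto_zero]
    exact squeeze_zero' (Eventually.of_forall fun i => norm_nonneg _)
      (h1.mono fun h hh => hh.2.norm_le) hV'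
  refine ⟨h1, h2, ?_⟩
  have h3 : Tendsto (fun h : ℝ => (h : ℂ)) (𝓝[≠] (0 : ℝ)) (𝓝 0) := by
    have : Tendsto (fun h : ℝ => (h : ℂ)) (𝓝 (0 : ℝ)) (𝓝 ((0 : ℝ) : ℂ)) :=
      Complex.continuous_ofReal.tendsto 0
    rw [Complex.ofReal_zero] at this
    exact this.mono_left nhdsWithin_le_nhds
  have h4 := (h3.smul h2).add_const (K s * ContinuousLinearMap.adjoint (K s))
  rw [zero_smul, zero_add] at h4
  refine h4.congr' ?_
  filter_upwards [self_mem_nhdsWithin] with h hh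
  have : (h : ℂ) ≠ 0 := by exact_mod_cast hh
  rw [smul_smul, mul_inv_cancel₀ this, one_smul, sub_add_cancel]

lemma main_upper
    (H0 : SelfAdjointOp H) (Ω : Set ℝ) (hΩo : IsOpen Ω)
    (K : ℝ → H →L[ℂ] H) (Hs : ℝ → SelfAdjointOp H) (V' : H →L[ℂ] H)
    (hV : ∀ s ∈ Ω, IsTraceClass (K s * ContinuousLinearMap.adjoint (K s)))
    (hHs : ∀ s ∈ Ω, IsSumOf (Hs s) H0 (K s * ContinuousLinearMap.adjoint (K s)))
    {s : ℝ} (hs : s ∈ Ω) (hg : Good V')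
    (hV' : Tendsto (fun h : ℝ => traceNorm (((h : ℂ))⁻¹ •
          (K (s + h) * ContinuousLinearMap.adjoint (K (s + h)) -
            K s * ContinuousLinearMap.adjoint (K s)) - V'))
        (𝓝[≠] (0 : ℝ)) (𝓝 0)) {z : ℂ} (hz : 0 < z.im) :
      HasDerivAt (fun t : ℝ => trH (opLog
          (1 + ContinuousLinearMap.adjoint (K t) * H0.resolvent z * K t)))
        (trH (V' * (Hs s).resolvent z)) s := by
  obtain ⟨h1, -, h3⟩ := diff_tendsto hΩo K hV hs hg hV'
  rw [hasDerivAt_iff_tendsto_slope_zero]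
  have hX := fun t ht => unitX hz (hHs s hs) (t := t) ht
  have hM := WW_tendsto hX (Y := fun h => H0.resolvent z *
    (K (s + h) * ContinuousLinearMap.adjoint (K (s + h)))) (l := 𝓝[≠] (0:ℝ))
    (h1.mono fun h hh t ht => unitX hz (hHs _ hh.1) ht) (h3.const_mul _)
  rw [int_WW hX] at hM
  have hQ := (hM.const_smul Complex.I).mul_const (H0.resolvent z)
  have e : (Complex.I • -(Complex.I • W (H0.resolvent z *
      (K s * ContinuousLinearMap.adjoint (K s))) 0)) * H0.resolvent z = (Hs s).resolvent z := by
    rw [smul_neg, smul_smul, Complex.I_mul_I, neg_one_smul, neg_neg, W0_mul (hHs s hs) hz.ne']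
  rw [e] at hQ
  set Q : ℝ → H →L[ℂ] H := fun h => (Complex.I • ∫ t in Set.Ioi (0:ℝ),
    W (H0.resolvent z * (K s * ContinuousLinearMap.adjoint (K s))) t *
    W (H0.resolvent z * (K (s + h) * ContinuousLinearMap.adjoint (K (s + h)))) t) *
      H0.resolvent z with hQdef
  obtain ⟨φ, hφ⟩ := hg.exists_clm
  have t1 := (φ.continuous.tendsto ((Hs s).resolvent z)).comp hQ
  have t2 : Tendsto (fun h : ℝ => trH ((((h : ℂ))⁻¹ •
          (K (s + h) * ContinuousLinearMap.adjoint (K (s + h)) -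
            K s * ContinuousLinearMap.adjoint (K s)) - V') * Q h)) (𝓝[≠] (0 : ℝ)) (𝓝 0) := by
    have := hV'.mul hQ.norm
    rw [zero_mul] at this
    exact squeeze_zero_norm' (h1.mono fun h hh => hh.2.le_traceNorm (Q h)) this
  have t3 := t2.add t1
  rw [zero_add, hφ] at t3
  refine t3.congr' ?_
  filter_upwards [h1] with h hh
  have d := tr_opLog_diff hz (hHs s hs) (hHs _ hh.1) (hV s hs) (hV _ hh.1)
  have gd := ((hV _ hh.1).good.sub (hV _ hs).good)
  rw [d, Function.comp_apply, hφ, (gd.smul _).sub_mul hg, sub_add_cancel, smul_mul_assoc, trH_smul]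
  rw [Complex.real_smul, Complex.ofReal_inv]


/-- Lemma 4.2: for a trace-norm `C¹` family of nonnegative perturbations
`V(s) = K(s)K(s)*`, `d/ds tr log Φ(z,s) = tr (V'(s)(H(s)-z)⁻¹)` for `s ∈ Ω`,
`z ∈ ℂ∖ℝ`. -/
theorem deriv_trace_log_phi [SeparableSpace H]
    (H0 : SelfAdjointOp H) (Ω : Set ℝ) (hΩo : IsOpen Ω) (hΩc : Ω.OrdConnected)
    (K : ℝ → H →L[ℂ] H) (Hs : ℝ → SelfAdjointOp H) (V' : ℝ → H →L[ℂ] H)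
    (hV : ∀ s ∈ Ω, IsTraceClass (K s * ContinuousLinearMap.adjoint (K s)))
    (hHs : ∀ s ∈ Ω, IsSumOf (Hs s) H0 (K s * ContinuousLinearMap.adjoint (K s)))
    (hV' : ∀ s ∈ Ω, IsTraceClass (V' s) ∧
      Tendsto (fun h : ℝ => traceNorm (((h : ℂ))⁻¹ •
          (K (s + h) * ContinuousLinearMap.adjoint (K (s + h)) -
            K s * ContinuousLinearMap.adjoint (K s)) - V' s))
        (𝓝[≠] (0 : ℝ)) (𝓝 0))
    (hV'cont : ∀ s ∈ Ω,
      Tendsto (fun t : ℝ => traceNorm (V' t - V' s)) (𝓝[Ω] s) (𝓝 0)) :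
    ∀ s ∈ Ω, ∀ z : ℂ, z.im ≠ 0 →
      HasDerivAt (fun t : ℝ => trH (logHerg
          (fun w => 1 + ContinuousLinearMap.adjoint (K t) * H0.resolvent w * K t) z))
        (trH (V' s * (Hs s).resolvent z)) s := by

  intro s hs z hz
  obtain ⟨htc, hlim⟩ := hV' s hs
  have hg := htc.good
  rcases lt_or_gt_of_ne hz with hneg | hpos
  · have hz' : 0 < (starRingEnd ℂ z).im := by simpa using hneg
    have hu := main_upper H0 Ω hΩo K Hs (V' s) hV hHs hs hg hlim hz'
    obtain ⟨-, hl, -⟩ := diff_tendsto hΩo K hV hs hg hlim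
    have hsa : ContinuousLinearMap.adjoint (V' s) = V' s := by
      have h2 := ((ContinuousLinearMap.adjoint (𝕜 := ℂ) (E := H) (F := H)).continuous.tendsto
        (V' s)).comp hl
      refine tendsto_nhds_unique h2 (hl.congr ?_)
      intro h
      simp only [Function.comp_apply, map_smulₛₗ, map_sub, adj_KK, map_inv₀, Complex.conj_ofReal]
    have hd := (Complex.conjCLE.toContinuousLinearMap.hasFDerivAt.comp_hasDerivAt s hu)
    have e1 := aux_star hsa (Hs s) hz hg
    rw [← e1]
    refine hd.congr_of_eventuallyEq (Eventually.of_forall fun t => ?_)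
    have e2 : ContinuousLinearMap.adjoint
        (1 + ContinuousLinearMap.adjoint (K t) * H0.resolvent z * K t) =
        1 + ContinuousLinearMap.adjoint (K t) * H0.resolvent (starRingEnd ℂ z) * K t := by
      rw [← res_adj H0 hz]
      simp only [← ContinuousLinearMap.star_eq_adjoint, star_add, star_one, star_mul, star_star,
        mul_assoc]
    simp only [logHerg, if_neg hneg.not_gt, opLogAnti, e2, trH_adjoint]
    rfl
  · have hu := main_upper H0 Ω hΩo K Hs (V' s) hV hHs hs hg hlim hpos
    simpa only [logHerg, if_pos hpos] using hu

end SpectralShift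
end
end

section
/- (Carey.) Let H₀ be self-adjoint in the complex separable Hilbert space H and K ∈ B₂(H) Hilbert–Schmidt, and let Ξ(λ) be the spectral shift operator associated with Φ(z) = I_H + K*(H₀ − z)⁻¹K, i.e., the a.e.-defined family with 0 ≤ Ξ(λ) ∈ B₁(H), ‖Ξ(·)‖_{B₁} ∈ L¹(ℝ; dλ), and log(Φ(z)) = ∫_ℝ dλ Ξ(λ)(λ − z)⁻¹ for z ∈ ℂ∖ℝ. Then K*K = ∫_ℝ dλ Ξ(λ), the integral converging in the weak sense (the quadratic forms coincide: ‖Kf‖² = ∫_ℝ dλ (f, Ξ(λ) f) for all f ∈ H). In particular, for any nonnegative trace class V, choosing K = V^{1/2} reconstructs V = ∫_ℝ dλ Ξ(λ). -/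
open Complex Filter MeasureTheory TopologicalSpace ContinuousLinearMap
open scoped InnerProductSpace Topology

noncomputable section

namespace SpectralShift

variable {H : Type*} [NormedAddCommGroup H] [InnerProductSpace ℂ H] [CompleteSpace H]

lemma im_self_op (H0 : SelfAdjointOp H) (u : H0.dom) : (⟪(u : H), H0.op u⟫_ℂ).im = 0 := by
  have h := H0.symmetric u u
  have h2 : (starRingEnd ℂ) ⟪(u : H), H0.op u⟫_ℂ = ⟪H0.op u, (u : H)⟫_ℂ := inner_conj_symm _ _
  rw [h] at h2
  exact Complex.conj_eq_iff_im.1 h2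

lemma resolvent_bound (H0 : SelfAdjointOp H) {y : ℝ} (hy : 0 < y) (x : H) :
    y * ‖H0.resolvent (y * Complex.I) x‖ ≤ ‖x‖ := by
  have hz : ((y : ℂ) * Complex.I).im ≠ 0 := by simp [hy.ne']
  set u := H0.resolvent (y * Complex.I) x with hu
  have h1 := H0.op_resolvent hz x
  have h0 := im_self_op H0 ⟨u, H0.resolvent_mem hz x⟩
  have h2 : (⟪u, x⟫_ℂ).im = - (y * ‖u‖ ^ 2) := by
    rw [← h1, inner_sub_right, inner_smul_right, inner_self_eq_norm_sq_to_K, Complex.sub_im]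
    simp only at h0
    rw [h0]
    have : ((y : ℂ) * Complex.I * ((‖u‖ : ℝ) : ℂ) ^ 2) = ((y * ‖u‖ ^ 2 : ℝ) : ℂ) * Complex.I := by
      push_cast; ring
    simp only [Complex.coe_algebraMap]
    erw [this]
    rw [Complex.im_ofReal_mul]
    simp
  have h3 : y * ‖u‖ ^ 2 ≤ ‖u‖ * ‖x‖ := by
    calc y * ‖u‖ ^ 2 ≤ |(⟪u, x⟫_ℂ).im| := by rw [h2, abs_neg]; exact le_abs_self _
      _ ≤ ‖⟪u, x⟫_ℂ‖ := Complex.abs_im_le_norm _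
      _ ≤ _ := norm_inner_le_norm _ _
  rcases (norm_nonneg u).eq_or_lt with h | h
  · rw [← h]; simp
  · nlinarith

lemma resolvent_tendsto (H0 : SelfAdjointOp H) (x : H) :
    Tendsto (fun n : ℕ => (-(((n : ℝ) : ℂ) * Complex.I)) • H0.resolvent (((n : ℝ) : ℂ) * Complex.I) x)
      atTop (𝓝 x) := by
  rw [Metric.tendsto_atTop]
  intro ε hε
  obtain ⟨d, hd, hdx⟩ := H0.dense_dom.exists_dist_lt x (by positivity : (0:ℝ) < ε / 3)
  obtain ⟨N, hN⟩ := exists_nat_gt (‖H0.op ⟨d, hd⟩‖ / (ε / 3))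
  refine ⟨N + 1, fun n hn => ?_⟩
  have hNn : (N : ℝ) + 1 ≤ n := by exact_mod_cast hn
  have hn0 : (0 : ℝ) < n := by have : (0:ℝ) ≤ N := by positivity
                               linarith
  have hz : (((n : ℝ) : ℂ) * Complex.I).im ≠ 0 := by simpa using hn0.ne'
  set z := ((n : ℝ) : ℂ) * Complex.I with hzd
  have hzn : ‖-z‖ = n := by simp [hzd]
  have e1 : (-z) • H0.resolvent z d - d = - H0.resolvent z (H0.op ⟨d, hd⟩) := by
    have := H0.resolvent_op hz ⟨d, hd⟩
    simp only [map_sub, map_smul] at this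
    nth_rewrite 2 [← this]
    module
  have e2 : (-z) • H0.resolvent z x - x =
      (-z) • H0.resolvent z (x - d) - (x - d) + ((-z) • H0.resolvent z d - d) := by
    rw [map_sub]; module
  have b1 : ‖(-z) • H0.resolvent z (x - d)‖ ≤ ‖x - d‖ := by
    rw [norm_smul, hzn]; exact resolvent_bound H0 hn0 _
  have b2 := resolvent_bound H0 hn0 (H0.op ⟨d, hd⟩)
  have b3 : ‖H0.resolvent z (H0.op ⟨d, hd⟩)‖ < ε / 3 := by
    rw [div_lt_iff₀ (by positivity)] at hN
    have : (n : ℝ) * ‖H0.resolvent z (H0.op ⟨d, hd⟩)‖ < n * (ε / 3) := by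
      refine b2.trans_lt (hN.trans_le ?_)
      gcongr
      linarith
    exact lt_of_mul_lt_mul_left this hn0.le
  rw [dist_eq_norm] at hdx ⊢
  rw [e2, e1]
  calc _ ≤ ‖(-z) • H0.resolvent z (x - d) - (x - d)‖ + ‖- H0.resolvent z (H0.op ⟨d, hd⟩)‖ :=
        norm_add_le _ _
    _ ≤ (‖(-z) • H0.resolvent z (x - d)‖ + ‖x - d‖) + ‖H0.resolvent z (H0.op ⟨d, hd⟩)‖ := by
        rw [norm_neg]; gcongr; exact norm_sub_le _ _
    _ < ε := by linarith

lemma norm_c (t : ℝ) : ‖(1 : ℂ) + (t : ℂ) * Complex.I‖ ^ 2 = 1 + t ^ 2 := by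
  rw [← Complex.normSq_eq_norm_sq, Complex.normSq_apply]; simp; ring

lemma c_ne (t : ℝ) : (1 : ℂ) + (t : ℂ) * Complex.I ≠ 0 := by
  intro h; have := norm_c t; rw [h] at this; simp at this; nlinarith

lemma one_le_norm_c (t : ℝ) : 1 ≤ ‖(1 : ℂ) + (t : ℂ) * Complex.I‖ := by
  have := norm_c t
  nlinarith [norm_nonneg ((1 : ℂ) + (t : ℂ) * Complex.I), sq_nonneg t]

lemma isUnit_cA (A : H →L[ℂ] H) (hA : ‖A‖ ≤ 1 / 2) (t : ℝ) :
    IsUnit ((1 : H →L[ℂ] H) + A + ((t : ℂ) * Complex.I) • (1 : H →L[ℂ] H)) := by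
  set c := (1 : ℂ) + (t : ℂ) * Complex.I with hc
  have hc0 : c ≠ 0 := c_ne t
  have e : (1 : H →L[ℂ] H) + A + ((t : ℂ) * Complex.I) • (1 : H →L[ℂ] H)
      = c • (1 - (-(c⁻¹ • A))) := by
    rw [sub_neg_eq_add, smul_add, smul_smul, mul_inv_cancel₀ hc0, hc]; module
  rw [e]
  have h1 : ‖-(c⁻¹ • A)‖ < 1 := by
    rw [norm_neg, norm_smul, norm_inv]
    have : ‖c‖⁻¹ ≤ 1 := inv_le_one_of_one_le₀ (one_le_norm_c t)
    calc ‖c‖⁻¹ * ‖A‖ ≤ 1 * (1 / 2) := by gcongr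
      _ < 1 := by norm_num
  have := isUnit_one_sub_of_norm_lt_one h1
  exact (isUnit_smul_iff (Units.mk0 c hc0) _).2 this

lemma inverse_bound (A : H →L[ℂ] H) (hA : ‖A‖ ≤ 1 / 2) (t : ℝ) :
    ‖Ring.inverse ((1 : H →L[ℂ] H) + A + ((t : ℂ) * Complex.I) • (1 : H →L[ℂ] H))‖ ≤ 2 := by
  have hu := isUnit_cA A hA t
  set T := (1 : H →L[ℂ] H) + A + ((t : ℂ) * Complex.I) • (1 : H →L[ℂ] H) with hT
  refine ContinuousLinearMap.opNorm_le_bound _ (by norm_num) fun x => ?_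
  set y := Ring.inverse T x
  have hy : T y = x := by
    have := Ring.mul_inverse_cancel T hu
    exact congrArg (fun S : H →L[ℂ] H => S x) this
  have e : ((1 : ℂ) + (t : ℂ) * Complex.I) • y = x - A y := by
    rw [← hy, hT]
    simp only [add_apply, smul_apply, one_apply_eq_self]
    module
  have h1 : ‖y‖ ≤ ‖x‖ + ‖A y‖ := by
    calc ‖y‖ = 1 * ‖y‖ := (one_mul _).symm
      _ ≤ ‖(1 : ℂ) + (t : ℂ) * Complex.I‖ * ‖y‖ := by gcongr; exact one_le_norm_c t
      _ = ‖x - A y‖ := by rw [← norm_smul, e]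
      _ ≤ _ := norm_sub_le _ _
  have h2 : ‖A y‖ ≤ 1 / 2 * ‖y‖ := (A.le_opNorm y).trans (by gcongr)
  linarith

lemma logIntegrand_eq (A : H →L[ℂ] H) (hA : ‖A‖ ≤ 1 / 2) (t : ℝ) :
    logIntegrand (1 + A) t = -((((1 : ℂ) + (t : ℂ) * Complex.I)⁻¹ ^ 2) • A) +
      (((1 : ℂ) + (t : ℂ) * Complex.I)⁻¹ ^ 2) • (A * A *
        Ring.inverse ((1 : H →L[ℂ] H) + A + ((t : ℂ) * Complex.I) • (1 : H →L[ℂ] H))) := by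
  have hu := isUnit_cA A hA t
  unfold logIntegrand
  set c := (1 : ℂ) + (t : ℂ) * Complex.I with hc
  have hc0 : c ≠ 0 := c_ne t
  set T := (1 : H →L[ℂ] H) + A + ((t : ℂ) * Complex.I) • (1 : H →L[ℂ] H) with hT
  have hTc : T = c • 1 + A := by rw [hT, hc]; module
  have h1 : T * Ring.inverse T = 1 := Ring.mul_inverse_cancel T hu
  set S := Ring.inverse T
  have h2 : c • S = 1 - A * S := by
    rw [hTc, add_mul, smul_mul_assoc, one_mul] at h1
    rw [← h1]; abel
  have h3 : S = c⁻¹ • (1 - A * S) := by rw [← h2, smul_smul, inv_mul_cancel₀ hc0, one_smul]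
  have h4 : A * S = c⁻¹ • (A - A * A * S) := by
    conv_lhs => rw [h3]
    rw [mul_smul_comm, mul_sub, mul_one, mul_assoc]
  conv_lhs => rw [h3, h4]
  rw [smul_sub, smul_smul, pow_two]
  module

lemma continuous_inv (A : H →L[ℂ] H) (hA : ‖A‖ ≤ 1 / 2) : Continuous fun t : ℝ =>
    Ring.inverse ((1 : H →L[ℂ] H) + A + ((t : ℂ) * Complex.I) • (1 : H →L[ℂ] H)) := by
  rw [continuous_iff_continuousAt]
  intro t
  obtain ⟨u, hu⟩ := isUnit_cA A hA t
  have h := NormedRing.inverse_continuousAt u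
  rw [hu] at h
  exact ContinuousAt.comp (f := fun t : ℝ => (1 : H →L[ℂ] H) + A + ((t : ℂ) * Complex.I) • (1 : H →L[ℂ] H)) h
    (Continuous.continuousAt (by fun_prop))

lemma continuous_cinv : Continuous fun t : ℝ => ((1 : ℂ) + (t : ℂ) * Complex.I)⁻¹ ^ 2 :=
  (Continuous.inv₀ (by fun_prop) c_ne).pow 2

lemma norm_cinv (t : ℝ) : ‖((1 : ℂ) + (t : ℂ) * Complex.I)⁻¹ ^ 2‖ = (1 + t ^ 2)⁻¹ := by
  rw [norm_pow, norm_inv, inv_pow, norm_c]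

lemma integrable_cinv : Integrable fun t : ℝ => ((1 : ℂ) + (t : ℂ) * Complex.I)⁻¹ ^ 2 :=
  integrable_inv_one_add_sq.mono' continuous_cinv.aestronglyMeasurable
    (ae_of_all _ fun t => (norm_cinv t).le)

lemma integral_cinv : ∫ t in Set.Ioi (0 : ℝ), ((1 : ℂ) + (t : ℂ) * Complex.I)⁻¹ ^ 2 = -Complex.I := by
  have hd : ∀ t ∈ Set.Ici (0 : ℝ), HasDerivAt
      (fun t : ℝ => Complex.I * ((1 : ℂ) + (t : ℂ) * Complex.I)⁻¹)
      (((1 : ℂ) + (t : ℂ) * Complex.I)⁻¹ ^ 2) t := by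
    intro t _
    have h1 : HasDerivAt (fun t : ℝ => (1 : ℂ) + (t : ℂ) * Complex.I) (1 * Complex.I) t :=
      ((Complex.ofRealCLM.hasDerivAt (x := t)).mul_const Complex.I).const_add 1
    have h2 := (h1.inv (c_ne t)).const_mul Complex.I
    have e : Complex.I * (-(1 * Complex.I) / (1 + (t : ℂ) * Complex.I) ^ 2) =
        ((1 : ℂ) + (t : ℂ) * Complex.I)⁻¹ ^ 2 := by
      rw [one_mul, inv_pow, neg_div, mul_neg, ← mul_div_assoc, Complex.I_mul_I, neg_div, neg_neg, one_div]
    rw [e] at h2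
    exact h2
  have ht : Tendsto (fun t : ℝ => Complex.I * ((1 : ℂ) + (t : ℂ) * Complex.I)⁻¹) atTop (𝓝 0) := by
    rw [tendsto_zero_iff_norm_tendsto_zero]
    refine squeeze_zero' (Eventually.of_forall fun _ => norm_nonneg _) ?_ tendsto_inv_atTop_zero
    filter_upwards [eventually_gt_atTop 0] with t ht
    rw [norm_mul, Complex.norm_I, one_mul, norm_inv]
    gcongr
    exact abs_le_of_sq_le_sq' (by rw [norm_c]; linarith) (norm_nonneg _) |>.2
  have := integral_Ioi_of_hasDerivAt_of_tendsto' hd integrable_cinv.integrableOn ht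
  rw [this]; simp

lemma opLog_bound (A : H →L[ℂ] H) (hA : ‖A‖ ≤ 1 / 2) :
    ‖opLog (1 + A) - A‖ ≤ 2 * Real.pi * ‖A‖ ^ 2 := by
  set r : ℝ → H →L[ℂ] H := fun t => (((1 : ℂ) + (t : ℂ) * Complex.I)⁻¹ ^ 2) • (A * A *
        Ring.inverse ((1 : H →L[ℂ] H) + A + ((t : ℂ) * Complex.I) • (1 : H →L[ℂ] H))) with hr
  have hrb : ∀ t, ‖r t‖ ≤ (2 * ‖A‖ ^ 2) * (1 + t ^ 2)⁻¹ := by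
    intro t
    rw [hr]; simp only
    rw [norm_smul, norm_cinv, mul_comm]
    gcongr
    calc _ ≤ ‖A * A‖ * _ := norm_mul_le _ _
      _ ≤ (‖A‖ * ‖A‖) * 2 := by gcongr; exact norm_mul_le _ _; exact inverse_bound A hA t
      _ = _ := by ring
  have hrc : Continuous r := continuous_cinv.smul (continuous_const.mul (continuous_inv A hA))
  have hgi : Integrable fun t : ℝ => (2 * ‖A‖ ^ 2) * (1 + t ^ 2)⁻¹ :=
    integrable_inv_one_add_sq.const_mul _
  have hri : Integrable r := hgi.mono' hrc.aestronglyMeasurable (ae_of_all _ hrb)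
  have hL : logIntegrand (1 + A) = fun t : ℝ => -((((1 : ℂ) + (t : ℂ) * Complex.I)⁻¹ ^ 2) • A) + r t :=
    funext fun t => logIntegrand_eq A hA t
  have hi1 : Integrable fun t : ℝ => -((((1 : ℂ) + (t : ℂ) * Complex.I)⁻¹ ^ 2) • A) :=
    (integrable_cinv.smul_const A).neg
  have hLi : Integrable (logIntegrand (1 + A)) := by rw [hL]; exact hi1.add hri
  have hlim : opLog (1 + A) = (-Complex.I) • ∫ t in Set.Ioi (0:ℝ), logIntegrand (1 + A) t :=
    ((intervalIntegral_tendsto_integral_Ioi 0 hLi.integrableOn tendsto_id).const_smul _).limUnder_eq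
  have hint : ∫ t in Set.Ioi (0:ℝ), logIntegrand (1 + A) t = Complex.I • A + ∫ t in Set.Ioi (0:ℝ), r t := by
    rw [hL, integral_add hi1.integrableOn hri.integrableOn, integral_neg, integral_smul_const,
      integral_cinv]
    simp
  have e : opLog (1 + A) - A = (-Complex.I) • ∫ t in Set.Ioi (0:ℝ), r t := by
    rw [hlim, hint, smul_add, smul_smul]; simp
  rw [e, norm_smul, norm_neg, Complex.norm_I, one_mul]
  calc _ ≤ ∫ t in Set.Ioi (0:ℝ), (2 * ‖A‖ ^ 2) * (1 + t ^ 2)⁻¹ :=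
        norm_integral_le_of_norm_le hgi.integrableOn (ae_of_all _ hrb)
    _ ≤ ∫ t : ℝ, (2 * ‖A‖ ^ 2) * (1 + t ^ 2)⁻¹ :=
        setIntegral_le_integral hgi (ae_of_all _ fun t => by positivity)
    _ = _ := by rw [integral_const_mul, integral_univ_inv_one_add_sq]; ring

lemma log_tendsto (H0 : SelfAdjointOp H) (K : H →L[ℂ] H) (f : H) :
    Tendsto (fun n : ℕ => (-(((n : ℝ) : ℂ) * Complex.I)) * ⟪f, logHerg
          (fun w => 1 + ContinuousLinearMap.adjoint K * H0.resolvent w * K)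
            (((n : ℝ) : ℂ) * Complex.I) f⟫_ℂ) atTop (𝓝 ⟪K f, K f⟫_ℂ) := by
  set z : ℕ → ℂ := fun n => ((n : ℝ) : ℂ) * Complex.I with hz
  set A : ℕ → H →L[ℂ] H := fun n => ContinuousLinearMap.adjoint K * H0.resolvent (z n) * K with hAd
  have hmain : Tendsto (fun n => (-(z n)) * ⟪f, A n f⟫_ℂ) atTop (𝓝 ⟪K f, K f⟫_ℂ) := by
    have h := (tendsto_const_nhds (x := K f)).inner (𝕜 := ℂ) (resolvent_tendsto H0 (K f))
    refine h.congr fun n => ?_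
    rw [inner_smul_right]
    simp only [hAd, mul_apply_eq_comp]
    rw [adjoint_inner_right]
  have hAn : ∀ n : ℕ, 0 < n → (n : ℝ) * ‖A n‖ ≤ ‖K‖ ^ 2 := by
    intro n hn
    have hn0 : (0:ℝ) < n := by exact_mod_cast hn
    have h1 : ‖H0.resolvent (z n)‖ ≤ 1 / n := by
      refine opNorm_le_bound _ (by positivity) fun x => ?_
      have := resolvent_bound H0 hn0 x
      rw [div_mul_eq_mul_div, le_div_iff₀ hn0, one_mul, mul_comm]
      exact this
    have h2 : ‖A n‖ ≤ ‖K‖ * (1 / n) * ‖K‖ := by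
      calc ‖A n‖ ≤ ‖ContinuousLinearMap.adjoint K * H0.resolvent (z n)‖ * ‖K‖ := norm_mul_le _ _
        _ ≤ (‖ContinuousLinearMap.adjoint K‖ * ‖H0.resolvent (z n)‖) * ‖K‖ := by
            gcongr; exact norm_mul_le _ _
        _ ≤ _ := by rw [LinearIsometryEquiv.norm_map]; gcongr
    calc (n : ℝ) * ‖A n‖ ≤ n * (‖K‖ * (1 / n) * ‖K‖) := by gcongr
      _ = _ := by field_simp
  have herr : Tendsto (fun n : ℕ => (-(z n)) * ⟪f, (opLog (1 + A n) - A n : H →L[ℂ] H) f⟫_ℂ) atTop (𝓝 0) := by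
    rw [tendsto_zero_iff_norm_tendsto_zero]
    have hlim : Tendsto (fun n : ℕ => (2 * Real.pi * (‖K‖ ^ 2) ^ 2 * ‖f‖ ^ 2) / (n : ℝ)) atTop (𝓝 0) :=
      tendsto_const_div_atTop_nhds_zero_nat _
    refine squeeze_zero' (Eventually.of_forall fun _ => norm_nonneg _) ?_ hlim
    obtain ⟨N, hN⟩ := exists_nat_gt (2 * ‖K‖ ^ 2)
    filter_upwards [eventually_ge_atTop (N + 1)] with n hn
    have hNn : (N : ℝ) + 1 ≤ n := by exact_mod_cast hn
    have hn1 : 0 < n := by omega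
    have hn0 : (0:ℝ) < n := by exact_mod_cast hn1
    have hb := hAn n hn1
    have hA : ‖A n‖ ≤ 1 / 2 := by
      by_contra hcon
      push Not at hcon
      nlinarith
    have hb2 := opLog_bound (A n) hA
    have hzn : ‖-(z n)‖ = n := by simp [hz]
    rw [norm_mul, hzn, le_div_iff₀ hn0]
    calc (n : ℝ) * ‖⟪f, (opLog (1 + A n) - A n : H →L[ℂ] H) f⟫_ℂ‖ * n
        ≤ (n : ℝ) * (‖f‖ * (2 * Real.pi * ‖A n‖ ^ 2 * ‖f‖)) * n := by
          gcongr
          refine (norm_inner_le_norm _ _).trans ?_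
          gcongr
          exact (le_opNorm _ _).trans (by gcongr)
      _ = 2 * Real.pi * (n * ‖A n‖) ^ 2 * ‖f‖ ^ 2 := by ring
      _ ≤ _ := by gcongr
  have := hmain.add herr
  rw [add_zero] at this
  refine this.congr' ?_
  filter_upwards [eventually_gt_atTop 0] with n hn
  have hn0 : (0:ℝ) < n := by exact_mod_cast hn
  have : 0 < (z n).im := by simpa [hz] using hn
  unfold logHerg
  rw [if_pos this, ← mul_add, ← inner_add_right, ← add_apply]
  simp [hAd, hz]

/-- Lemma 4.6 (Carey): `K*K = ∫_ℝ Ξ(λ) dλ` in the weak sense, i.e.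
`‖Kf‖² = ∫_ℝ (f, Ξ(λ) f) dλ` for all `f ∈ H`, where `Ξ` is the spectral shift
operator associated with `Φ(z) = I + K*(H₀-z)⁻¹K`. -/
theorem carey_reconstruction [SeparableSpace H]
    (H0 : SelfAdjointOp H) (K : H →L[ℂ] H) (hK : IsHilbertSchmidt K)
    (Ξ : ℝ → H →L[ℂ] H)
    (hmeas : ∀ f g : H, Measurable fun l : ℝ => ⟪f, Ξ l g⟫_ℂ)
    (hbd : ∀ᵐ l ∂(volume : Measure ℝ),
      (Ξ l).IsPositive ∧ ((1 : H →L[ℂ] H) - Ξ l).IsPositive ∧ IsTraceClass (Ξ l))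
    (hL1 : Integrable fun l : ℝ => traceNorm (Ξ l))
    (hrep : ∀ z : ℂ, z.im ≠ 0 → ∀ f g : H,
      Integrable (fun l : ℝ => ((l : ℂ) - z)⁻¹ * ⟪f, Ξ l g⟫_ℂ) ∧
      ⟪f, logHerg
          (fun w => 1 + ContinuousLinearMap.adjoint K * H0.resolvent w * K) z g⟫_ℂ =
        ∫ l : ℝ, ((l : ℂ) - z)⁻¹ * ⟪f, Ξ l g⟫_ℂ) :
    ∀ f : H,
      Integrable (fun l : ℝ => (⟪f, Ξ l f⟫_ℂ).re) ∧
      ‖K f‖ ^ 2 = ∫ l : ℝ, (⟪f, Ξ l f⟫_ℂ).re := by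
  intro f
  have hpos : ∀ᵐ l ∂(volume : Measure ℝ), 0 ≤ (⟪f, Ξ l f⟫_ℂ).re ∧ (⟪f, Ξ l f⟫_ℂ).im = 0 := by
    filter_upwards [hbd] with l hl
    have h := hl.1.inner_nonneg_right f
    rw [Complex.nonneg_iff] at h
    exact ⟨h.1, h.2.symm⟩
  have hφm : Measurable fun l : ℝ => (⟪f, Ξ l f⟫_ℂ).re := Complex.measurable_re.comp (hmeas f f)
  set φ : ℝ → ℝ := fun l => (⟪f, Ξ l f⟫_ℂ).re with hφ
  set w : ℕ → ℝ → ℝ := fun n l => (n : ℝ) ^ 2 / (l ^ 2 + (n : ℝ) ^ 2) with hw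
  have hlog := (Complex.continuous_re.tendsto _).comp (log_tendsto H0 K f)
  have hKf : (⟪K f, K f⟫_ℂ).re = ‖K f‖ ^ 2 := by
    rw [inner_self_eq_norm_sq_to_K]; norm_cast
  rw [hKf] at hlog
  have hwI : ∀ n : ℕ, 0 < n → Integrable (fun l => w n l * φ l) ∧
      ∫ l, w n l * φ l = ((-(((n : ℝ) : ℂ) * Complex.I)) * ⟪f, logHerg
          (fun w => 1 + ContinuousLinearMap.adjoint K * H0.resolvent w * K)
            (((n : ℝ) : ℂ) * Complex.I) f⟫_ℂ).re := by
    intro n hn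
    have hn0 : (0:ℝ) < n := by exact_mod_cast hn
    have hz : (((n : ℝ) : ℂ) * Complex.I).im ≠ 0 := by simpa using hn.ne'
    obtain ⟨hi, he⟩ := hrep _ hz f f
    have hi2 := hi.const_mul (-(((n : ℝ) : ℂ) * Complex.I))
    have hae : (fun l => w n l * φ l) =ᵐ[volume] fun l : ℝ => (-(((n : ℝ) : ℂ) * Complex.I) *
        (((l : ℂ) - ((n : ℝ) : ℂ) * Complex.I)⁻¹ * ⟪f, Ξ l f⟫_ℂ)).re := by
      filter_upwards [hpos] with l hl
      have e1 : ⟪f, Ξ l f⟫_ℂ = ((φ l : ℝ) : ℂ) := by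
        apply Complex.ext
        · simp [hφ]
        · simp [hl.2]
      have e2 : (-(((n : ℝ) : ℂ) * Complex.I) * ((l : ℂ) - ((n : ℝ) : ℂ) * Complex.I)⁻¹).re = w n l := by
        rw [Complex.mul_re, Complex.inv_re, Complex.inv_im, Complex.normSq_apply]
        simp [hw]
        ring
      rw [e1, ← mul_assoc, Complex.re_mul_ofReal, e2]
    refine ⟨hi2.re.congr hae.symm, ?_⟩
    rw [integral_congr_ae hae, he, ← integral_const_mul]
    exact integral_re hi2
  have hmono : Tendsto (fun n : ℕ => ∫⁻ l, ENNReal.ofReal (w n l * φ l)) atTop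
      (𝓝 (∫⁻ l, ENNReal.ofReal (φ l))) := by
    refine lintegral_tendsto_of_tendsto_of_monotone (fun n => ?_) ?_ ?_
    · exact (((by fun_prop : Measurable (w n)).mul hφm).ennreal_ofReal).aemeasurable
    · filter_upwards [hpos] with l hl
      intro n m hnm
      apply ENNReal.ofReal_le_ofReal
      refine mul_le_mul_of_nonneg_right ?_ hl.1
      simp only [hw]
      rcases Nat.eq_zero_or_pos n with h0 | h0
      · subst h0; simp; positivity
      have hn0 : (0:ℝ) < n := by exact_mod_cast h0
      have hnm' : (n : ℝ) ≤ m := by exact_mod_cast hnm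
      have hm0 : (0:ℝ) < m := hn0.trans_le hnm'
      rw [div_le_div_iff₀ (by positivity) (by positivity)]
      have : (n : ℝ) ^ 2 ≤ m ^ 2 := by gcongr
      nlinarith [sq_nonneg l]
    · refine ae_of_all _ fun l => ?_
      refine ENNReal.tendsto_ofReal ?_
      have h1 : Tendsto (fun n : ℕ => w n l) atTop (𝓝 1) := by
        have ha : Tendsto (fun n : ℕ => l ^ 2 * ((n : ℝ)⁻¹) ^ 2 + 1) atTop (𝓝 (l ^ 2 * 0 ^ 2 + 1)) :=
          ((tendsto_inv_atTop_nhds_zero_nat (𝕜 := ℝ)).pow 2 |>.const_mul _).add_const 1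
        have hb := ha.inv₀ (by norm_num)
        norm_num at hb
        refine hb.congr' ?_
        filter_upwards [eventually_gt_atTop 0] with n hn
        have hn0 : (0:ℝ) < n := by exact_mod_cast hn
        simp only [hw]
        field_simp
      simpa using h1.mul_const (φ l)
  have hlim2 : Tendsto (fun n : ℕ => ∫⁻ l, ENNReal.ofReal (w n l * φ l)) atTop
      (𝓝 (ENNReal.ofReal (‖K f‖ ^ 2))) := by
    refine (ENNReal.tendsto_ofReal hlog).congr' ?_
    filter_upwards [eventually_gt_atTop 0] with n hn
    obtain ⟨h1, h2⟩ := hwI n hn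
    simp only [Function.comp]
    rw [← h2]
    refine ofReal_integral_eq_lintegral_ofReal h1 ?_
    filter_upwards [hpos] with l hl
    exact mul_nonneg (by simp only [hw]; positivity) hl.1
  have heq := tendsto_nhds_unique hmono hlim2
  have hnn : 0 ≤ᵐ[volume] φ := by filter_upwards [hpos] with l hl using hl.1
  refine ⟨⟨hφm.aestronglyMeasurable, ?_⟩, ?_⟩
  · rw [hasFiniteIntegral_iff_ofReal hnn, heq]; exact ENNReal.ofReal_lt_top
  · rw [integral_eq_lintegral_of_nonneg_ae hnn hφm.aestronglyMeasurable, heq,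
      ENNReal.toReal_ofReal (by positivity)]

end SpectralShift
end
end
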